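/- arXiv:2002.02766 — 2 statements merged into one kernel-verified Lean document; each statement's English description precedes it below -/
import Mathlib

section
/- A priori L² estimate for the ε-Milne problem with geometric correction (Theorem 'Milne LT Theorem'): There exist ε₀ ∈ (0,1) and C > 0, depending only on R₁, R₂, n, K and M, such that for every ε ∈ (0, ε₀] and every classical solution f of the ε-Milne problem with geometric correction whose data h, S satisfy the data bounds, one has |f_L| ≤ C and ‖f − f_L‖_{L²} ≤ C. -/
noncomputable section

open Real Set MeasureTheory

namespace MilneStmt

/-- The boundary-layer thickness `L = ε^(-n)`. -/
def layerL (ε n : ℝ) : ℝ := ε ^ (-n)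

/-- The geometric force `F(η,ψ)`. -/
def force (R₁ R₂ ε η ψ : ℝ) : ℝ :=
  -ε * (Real.sin ψ ^ 2 / (R₁ - ε * η) + Real.cos ψ ^ 2 / (R₂ - ε * η))

/-- The domain `D = [0,L] × [-π/2, π/2] × [-π, π]` of the variables `(η, φ, ψ)`. -/
def milneDomain (L : ℝ) : Set (ℝ × ℝ × ℝ) :=
  Icc (0 : ℝ) L ×ˢ Icc (-(π / 2)) (π / 2) ×ˢ Icc (-π) π

/-- The in-flow set `{(φ,ψ) : sin φ > 0, ψ ∈ [-π,π]}` (with `φ` in the velocity range). -/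
def inflowSet : Set (ℝ × ℝ) :=
  {q | 0 < Real.sin q.1 ∧ q.1 ∈ Icc (-(π / 2)) (π / 2) ∧ q.2 ∈ Icc (-π) π}

/-- The angular average `f̄(η)`. -/
def angAvg (f : ℝ × ℝ × ℝ → ℝ) (η : ℝ) : ℝ :=
  (1 / (4 * π)) * ∫ ψ in (-π)..π, ∫ φ in (-(π / 2))..(π / 2), f (η, φ, ψ) * Real.cos φ

/-- Partial derivative in `η`. -/
def dEta (g : ℝ × ℝ × ℝ → ℝ) (p : ℝ × ℝ × ℝ) : ℝ :=
  deriv (fun t => g (t, p.2.1, p.2.2)) p.1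

/-- Partial derivative in `φ`. -/
def dPhi (g : ℝ × ℝ × ℝ → ℝ) (p : ℝ × ℝ × ℝ) : ℝ :=
  deriv (fun t => g (p.1, t, p.2.2)) p.2.1

/-- Partial derivative in `ψ`. -/
def dPsi (g : ℝ × ℝ × ℝ → ℝ) (p : ℝ × ℝ × ℝ) : ℝ :=
  deriv (fun t => g (p.1, p.2.1, t)) p.2.2

/-- A classical solution of the ε-Milne problem with geometric correction,
with in-flow data `h` and source `S`. -/
structure IsMilneSolution (R₁ R₂ ε n : ℝ) (h : ℝ → ℝ → ℝ) (S : ℝ × ℝ × ℝ → ℝ)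
    (f : ℝ × ℝ × ℝ → ℝ) : Prop where
  smooth : ContDiffOn ℝ 1 f (milneDomain (layerL ε n))
  eqn : ∀ p ∈ interior (milneDomain (layerL ε n)),
    Real.sin p.2.1 * dEta f p + force R₁ R₂ ε p.1 p.2.2 * Real.cos p.2.1 * dPhi f p
      + f p - angAvg f p.1 = S p
  inflow : ∀ q ∈ inflowSet, f (0, q.1, q.2) = h q.1 q.2
  reflect : ∀ φ ψ : ℝ, f (layerL ε n, φ, ψ) = f (layerL ε n, -φ, ψ)

/-- The weighted `L²` norm on `D`. -/
def l2Norm (L : ℝ) (g : ℝ × ℝ × ℝ → ℝ) : ℝ :=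
  Real.sqrt (∫ η in (0 : ℝ)..L, ∫ ψ in (-π)..π, ∫ φ in (-(π / 2))..(π / 2),
    g (η, φ, ψ) ^ 2 * Real.cos φ)

/-- The `L^∞` norm (sup over `D`). -/
def linfNorm (L : ℝ) (g : ℝ × ℝ × ℝ → ℝ) : ℝ :=
  ⨆ p ∈ milneDomain L, |g p|

/-- The `L^∞` norm over the in-flow boundary. -/
def inflowLinf (g : ℝ → ℝ → ℝ) : ℝ :=
  ⨆ q ∈ inflowSet, |g q.1 q.2|

/-- The limit value `f_L = (3/(4π)) ∫∫ f(L,φ,ψ) sin²φ cos φ dφ dψ`. -/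
def limitValue (L : ℝ) (f : ℝ × ℝ × ℝ → ℝ) : ℝ :=
  (3 / (4 * π)) * ∫ ψ in (-π)..π, ∫ φ in (-(π / 2))..(π / 2),
    f (L, φ, ψ) * Real.sin φ ^ 2 * Real.cos φ

/-- The data bounds with constants `K` and `M` for in-flow data `h` and source `S`. -/
structure DataBounds (K M L : ℝ) (h : ℝ → ℝ → ℝ) (S : ℝ × ℝ × ℝ → ℝ) : Prop where
  hSmooth : ContDiffOn ℝ 1 (fun q : ℝ × ℝ => h q.1 q.2) inflowSet
  hBound : ∀ q ∈ inflowSet,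
    |h q.1 q.2| + |deriv (fun t => h t q.2) q.1| + |deriv (fun t => h q.1 t) q.2| ≤ M
  sSmooth : ContDiffOn ℝ 1 S (milneDomain L)
  sBound : ∀ p ∈ milneDomain L,
    Real.exp (K * p.1) * (|S p| + |dEta S p| + |dPhi S p| + |dPsi S p|) ≤ M


lemma aux_exp_int (K : ℝ) (hK : 0 < K) (a b : ℝ) :
    ∫ s in a..b, exp (-(K * s)) ≤ exp (-(K * a)) / K := by
  have h : ∫ s in a..b, exp (-(K * s)) = (-(exp (-(K * b)) / K)) - (-(exp (-(K * a)) / K)) := by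
    refine intervalIntegral.integral_eq_sub_of_hasDerivAt (f := fun s => -(exp (-(K * s)) / K))
      ?_ (Continuous.intervalIntegrable (by fun_prop) _ _)
    intro x _
    have h1 : HasDerivAt (fun s => -(K * s)) (-(K * 1)) x := ((hasDerivAt_id x).const_mul K).neg
    have h2 := ((h1.exp).div_const K).neg
    have h3 : -(rexp (-(K * x)) * -(K * 1) / K) = rexp (-(K * x)) := by field_simp
    rw [h3] at h2
    exact h2
  rw [h]
  have : 0 < exp (-(K * b)) / K := by positivity
  linarith

lemma aux_cs1 (L : ℝ) (hL : 0 < L) (m : ℝ → ℝ) (hm : Continuous m) :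
    (∫ s in (0 : ℝ)..L, m s) ^ 2 ≤ L * ∫ s in (0 : ℝ)..L, m s ^ 2 := by
  set P := ∫ s in (0 : ℝ)..L, m s with hP
  have h0 : 0 ≤ ∫ s in (0 : ℝ)..L, (m s - P / L) ^ 2 :=
    intervalIntegral.integral_nonneg hL.le (fun _ _ => sq_nonneg _)
  have h1 : ∫ s in (0 : ℝ)..L, (m s - P / L) ^ 2
      = (∫ s in (0 : ℝ)..L, m s ^ 2) - 2 * (P / L) * P + (P / L) ^ 2 * L := by
    have : (fun s => (m s - P / L) ^ 2)
        = fun s => (m s ^ 2 - 2 * (P / L) * m s) + (P / L) ^ 2 := by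
      funext s; ring
    rw [this, intervalIntegral.integral_add (Continuous.intervalIntegrable (by fun_prop) _ _)
      (Continuous.intervalIntegrable (by fun_prop) _ _),
      intervalIntegral.integral_sub (Continuous.intervalIntegrable (by fun_prop) _ _)
      (Continuous.intervalIntegrable (by fun_prop) _ _), intervalIntegral.integral_const_mul]
    simp [hP]; ring
  rw [h1] at h0
  have h2 : L * ((∫ s in (0 : ℝ)..L, m s ^ 2) - 2 * (P / L) * P + (P / L) ^ 2 * L)
      = L * (∫ s in (0 : ℝ)..L, m s ^ 2) - P ^ 2 := by field_simp; ring
  have := mul_nonneg hL.le h0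
  rw [h2] at this
  linarith

lemma aux_alg (D₀ D₁ c₂ X Z Q : ℝ) (hX : 0 ≤ X) (hZ : 0 ≤ Z)
    (hD₁ : 0 ≤ D₁) (hc₂ : 0 ≤ c₂)
    (hQ : Q ≤ Z + X / 25 + 2 * c₂)
    (hE : Z ^ 2 / 2 + X ^ 2 ≤ D₀ + 3 / 100 * X ^ 2 + 1 / 100 * X * Q + D₁ * Q + X ^ 2 / 4) :
    Z ^ 2 / 8 + X ^ 2 / 4 ≤ D₀ + 2 * D₁ * c₂ + 4 * (D₁ + c₂) ^ 2 := by
  have h1 : X * Q ≤ X * (Z + X / 25 + 2 * c₂) := mul_le_mul_of_nonneg_left hQ hX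
  have h2 : D₁ * Q ≤ D₁ * (Z + X / 25 + 2 * c₂) := mul_le_mul_of_nonneg_left hQ hD₁
  nlinarith [sq_nonneg (Z - 2 * (D₁ + c₂) * 2), sq_nonneg (X - 2 * (D₁ + c₂)), sq_nonneg (X - Z),
    mul_nonneg hX hc₂, mul_nonneg hX hD₁, mul_nonneg hZ hc₂, mul_nonneg hZ hD₁, mul_nonneg hD₁ hc₂]

set_option maxHeartbeats 4000000 in
lemma core_real (c K M : ℝ) (hc : 0 < c) (hK : 0 < K) (hM : 0 < M) :
    ∃ κ > (0 : ℝ), ∃ C > (0 : ℝ), ∀ ε L W : ℝ, 0 < ε → 1 ≤ L → ε * L ^ 2 ≤ κ → 0 ≤ W →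
    ∀ ρ m J A q : ℝ → ℝ, Continuous ρ → Continuous m → Continuous J → Continuous A →
    Continuous q → (∀ η, 0 ≤ m η) → (∀ η, m η ^ 2 ≤ 4 * π * ρ η) →
    (∀ η ∈ Icc 0 L, |J η| ≤ ∫ s in η..L, (2 * (c * ε) * m s + 4 * π * M * exp (-(K * s)))) →
    (∀ η ∈ Icc 0 L, |A L - A η| ≤
      ∫ s in η..L, (|J s| + 4 * π * M * exp (-(K * s)) + 2 * (c * ε) * m s)) →
    (∀ η ∈ Icc 0 L, |q η - A η| ≤ m η) →
    A 0 ^ 2 ≤ W →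
    (W / 2 + ∫ s in (0 : ℝ)..L, ρ s ≤ 4 * π * M ^ 2 + ∫ s in (0 : ℝ)..L,
      (c * ε * (ρ s + 2 * |q s| * m s) + M * exp (-(K * s)) * (m s + 4 * π * |q s|))) →
    |A L| ≤ C ∧ ∫ s in (0 : ℝ)..L, (ρ s + 4 * π * (q s - A L) ^ 2) ≤ C := by
  have hπ := Real.pi_pos
  have hπ3 := Real.pi_gt_three
  have hπ4 := Real.pi_lt_d2
  obtain ⟨κ, hκdef⟩ : ∃ κ, κ = min 1 (1 / (1000 * c)) := ⟨_, rfl⟩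
  have hκ : 0 < κ := by rw [hκdef]; positivity
  have hκ1 : κ ≤ 1 := by rw [hκdef]; exact min_le_left _ _
  have hcκ : c * κ ≤ 1 / 1000 := by
    have : κ ≤ 1 / (1000 * c) := by rw [hκdef]; exact min_le_right _ _
    calc c * κ ≤ c * (1 / (1000 * c)) := by gcongr
      _ = 1 / 1000 := by field_simp
  obtain ⟨c₂, hc₂⟩ : ∃ c₂, c₂ = 4 * π * M * (1 / K ^ 2 + 1 / K) := ⟨_, rfl⟩
  have hc₂0 : 0 < c₂ := by rw [hc₂]; positivity
  obtain ⟨D₁, hD₁⟩ : ∃ D₁, D₁ = 4 * π * M / K := ⟨_, rfl⟩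
  have hD₁0 : 0 < D₁ := by rw [hD₁]; positivity
  obtain ⟨D₀, hD₀⟩ : ∃ D₀, D₀ = 4 * π * M ^ 2 + 4 * π * ((1 + 4 * π) * M) ^ 2 / K := ⟨_, rfl⟩
  have hD₀0 : 0 < D₀ := by rw [hD₀]; positivity
  obtain ⟨B, hB⟩ : ∃ B, B = D₀ + 2 * D₁ * c₂ + 4 * (D₁ + c₂) ^ 2 := ⟨_, rfl⟩
  have hB0 : 0 < B := by rw [hB]; positivity
  obtain ⟨C₁, hC₁⟩ : ∃ C₁, C₁ = 2 + 8 * B + c₂ := ⟨_, rfl⟩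
  obtain ⟨C₂, hC₂⟩ : ∃ C₂, C₂ = 4 * B + 12 * π * (4 * π * (4 * B) + (16 * 1) ^ 2 * (4 * B) + c₂ ^ 2 / K) :=
    ⟨_, rfl⟩
  have hC₁0 : 0 < C₁ := by rw [hC₁]; positivity
  have hC₂0 : 0 < C₂ := by rw [hC₂]; positivity
  refine ⟨κ, hκ, C₁ + C₂, by positivity, ?_⟩
  intro ε L W hε hL hεL hW ρ m J A q cρ cm cJ cA cq hm0 hmρ hJ hA hq hA0 hE
  have hL0 : 0 < L := by linarith
  have hρ0 : ∀ η, 0 ≤ ρ η := by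
    intro η
    have h1 := hmρ η
    have h2 := sq_nonneg (m η)
    by_contra hneg
    push Not at hneg
    have : 4 * π * ρ η < 0 := mul_neg_of_pos_of_neg (by positivity) hneg
    linarith
  have ii : ∀ (g : ℝ → ℝ) (a b : ℝ), Continuous g → IntervalIntegrable g volume a b :=
    fun g a b h => h.intervalIntegrable a b
  obtain ⟨P, hP⟩ : ∃ P, P = ∫ s in (0 : ℝ)..L, m s := ⟨_, rfl⟩
  have hP0 : 0 ≤ P := by
    rw [hP]; exact intervalIntegral.integral_nonneg hL0.le (fun s _ => hm0 s)
  obtain ⟨X2, hX2⟩ : ∃ X2, X2 = ∫ s in (0 : ℝ)..L, ρ s := ⟨_, rfl⟩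
  have hX20 : 0 ≤ X2 := by
    rw [hX2]; exact intervalIntegral.integral_nonneg hL0.le (fun s _ => hρ0 s)
  have hm2 : ∫ s in (0 : ℝ)..L, m s ^ 2 ≤ 4 * π * X2 := by
    rw [hX2, ← intervalIntegral.integral_const_mul]
    exact intervalIntegral.integral_mono_on hL0.le (ii _ _ _ (by fun_prop))
      (ii _ _ _ (by fun_prop)) (fun s _ => hmρ s)
  have hP2 : P ^ 2 ≤ 4 * π * L * X2 := by
    have := aux_cs1 L hL0 m cm
    rw [← hP] at this
    calc P ^ 2 ≤ L * ∫ s in (0 : ℝ)..L, m s ^ 2 := this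
      _ ≤ L * (4 * π * X2) := by gcongr
      _ = _ := by ring
  obtain ⟨X, hX⟩ : ∃ X, X = √X2 := ⟨_, rfl⟩
  have hXX : X ^ 2 = X2 := by rw [hX]; exact Real.sq_sqrt hX20
  have hX0 : 0 ≤ X := by rw [hX]; positivity
  obtain ⟨Z, hZ⟩ : ∃ Z, Z = √W := ⟨_, rfl⟩
  have hZZ : Z ^ 2 = W := by rw [hZ]; exact Real.sq_sqrt hW
  have hZ0 : 0 ≤ Z := by rw [hZ]; positivity
  -- smallness
  have hεLP2 : (ε * L * P) ^ 2 * L ≤ (4 * κ * X) ^ 2 := by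
    calc (ε * L * P) ^ 2 * L = ε ^ 2 * L ^ 3 * P ^ 2 := by ring
      _ ≤ ε ^ 2 * L ^ 3 * (4 * π * L * X2) := by gcongr
      _ = 4 * π * (ε * L ^ 2) ^ 2 * X2 := by ring
      _ ≤ 16 * κ ^ 2 * X2 := by gcongr; linarith
      _ = (4 * κ * X) ^ 2 := by rw [← hXX]; ring
  have hεLP : ε * L * P ≤ 4 * κ * X := by
    have h0 : 0 ≤ ε * L * P := by positivity
    refine abs_le_of_sq_le_sq' ?_ (by positivity) |>.2
    exact (le_mul_of_one_le_right (sq_nonneg _) hL).trans hεLP2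
  have hεP : ε * P ≤ ε * L * P := by
    have : 0 ≤ ε * P := by positivity
    calc ε * P ≤ ε * P * L := le_mul_of_one_le_right this hL
      _ = ε * L * P := by ring
  have hεκ : ε ≤ κ := by
    have : 1 ≤ L ^ 2 := one_le_pow₀ hL
    exact (le_mul_of_one_le_right hε.le this).trans hεL
  have tailm : ∀ η ∈ Icc 0 L, ∫ s in η..L, m s ≤ P := by
    intro η hη
    rw [hP, ← intervalIntegral.integral_add_adjacent_intervals (ii m 0 η cm) (ii m η L cm)]
    have := intervalIntegral.integral_nonneg (μ := volume) (f := m) hη.1 (fun s _ => hm0 s)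
    linarith
  have hJ' : ∀ η ∈ Icc 0 L, |J η| ≤ 2 * (c * ε) * P + D₁ * exp (-(K * η)) := by
    intro η hη
    refine (hJ η hη).trans ?_
    rw [intervalIntegral.integral_add (ii _ _ _ (by fun_prop)) (ii _ _ _ (by fun_prop)),
      intervalIntegral.integral_const_mul, intervalIntegral.integral_const_mul]
    have h1 := tailm η hη
    have h2 := aux_exp_int K hK η L
    have h3 : 4 * π * M * (∫ s in η..L, exp (-(K * s))) ≤ 4 * π * M * (exp (-(K * η)) / K) := by
      gcongr
    have h4 : 2 * (c * ε) * (∫ s in η..L, m s) ≤ 2 * (c * ε) * P := by gcongr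
    have h5 : 4 * π * M * (exp (-(K * η)) / K) = D₁ * exp (-(K * η)) := by rw [hD₁]; ring
    linarith
  obtain ⟨T, hT⟩ : ∃ T, T = 4 * c * (ε * L * P) := ⟨_, rfl⟩
  have hT0 : 0 ≤ T := by rw [hT]; positivity
  have hTX : T ≤ 16 / 1000 * X := by
    calc T = 4 * c * (ε * L * P) := hT
      _ ≤ 4 * c * (4 * κ * X) := by gcongr
      _ = 16 * (c * κ) * X := by ring
      _ ≤ 16 * (1 / 1000) * X := by gcongr
      _ = _ := by ring
  have hA' : ∀ η ∈ Icc 0 L, |A L - A η| ≤ T + c₂ * exp (-(K * η)) := by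
    intro η hη
    refine (hA η hη).trans ?_
    have h0 : ∫ s in η..L, (|J s| + 4 * π * M * exp (-(K * s)) + 2 * (c * ε) * m s)
        ≤ ∫ s in η..L, (2 * (c * ε) * P + (D₁ + 4 * π * M) * exp (-(K * s))
          + 2 * (c * ε) * m s) := by
      refine intervalIntegral.integral_mono_on hη.2 (ii _ _ _ (by fun_prop))
        (ii _ _ _ (by fun_prop)) ?_
      intro s hs
      have := hJ' s ⟨hη.1.trans hs.1, hs.2⟩
      linarith
    refine h0.trans ?_
    rw [intervalIntegral.integral_add (ii _ _ _ (by fun_prop)) (ii _ _ _ (by fun_prop)),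
      intervalIntegral.integral_add (ii _ _ _ (by fun_prop)) (ii _ _ _ (by fun_prop)),
      intervalIntegral.integral_const, smul_eq_mul,
      intervalIntegral.integral_const_mul (D₁ + 4 * π * M),
      intervalIntegral.integral_const_mul (2 * (c * ε))]
    have h1 := tailm η hη
    have h2 := aux_exp_int K hK η L
    have h3 : (D₁ + 4 * π * M) * (∫ s in η..L, exp (-(K * s)))
        ≤ (D₁ + 4 * π * M) * (exp (-(K * η)) / K) := by gcongr
    have h4 : 2 * (c * ε) * (∫ s in η..L, m s) ≤ 2 * (c * ε) * P := by gcongr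
    have h5 : (D₁ + 4 * π * M) * (exp (-(K * η)) / K) = c₂ * exp (-(K * η)) := by
      rw [hD₁, hc₂]; field_simp
    have h6 : (L - η) * (2 * (c * ε) * P) ≤ L * (2 * (c * ε) * P) := by
      gcongr; linarith [hη.1]
    have h7 : 2 * (c * ε) * P ≤ 2 * c * (ε * L * P) := by
      have := mul_le_mul_of_nonneg_left hεP (by positivity : 0 ≤ 2 * c)
      linarith
    have h8 : L * (2 * (c * ε) * P) = 2 * c * (ε * L * P) := by ring
    linarith
  have hAexp : ∀ η ∈ Icc 0 L, c₂ * exp (-(K * η)) ≤ c₂ := by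
    intro η hη
    have : exp (-(K * η)) ≤ 1 := by
      rw [Real.exp_le_one_iff]; have := mul_nonneg hK.le hη.1; linarith only [this]
    exact mul_le_of_le_one_right hc₂0.le this
  have hAL : |A L| ≤ Z + T + c₂ := by
    have h1 := hA' 0 ⟨le_rfl, hL0.le⟩
    have h2 := hAexp 0 ⟨le_rfl, hL0.le⟩
    have h3 : |A 0| ≤ Z := by rw [hZ]; exact Real.abs_le_sqrt hA0
    have h4 : |A L| ≤ |A L - A 0| + |A 0| := by
      have := abs_add_le (A L - A 0) (A 0); simpa using this
    linarith
  obtain ⟨Q, hQ⟩ : ∃ Q, Q = Z + 2 * T + 2 * c₂ := ⟨_, rfl⟩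
  have hQ0 : 0 ≤ Q := by rw [hQ]; positivity
  have hqQ : ∀ η ∈ Icc 0 L, |q η| ≤ Q + m η := by
    intro η hη
    have h1 := hA' η hη
    have h2 := hAexp η hη
    have h3 := hq η hη
    have h4 : |q η| ≤ |q η - A η| + |A L - A η| + |A L| := by
      have e : q η = (q η - A η) - (A L - A η) + A L := by ring
      calc |q η| = |(q η - A η) - (A L - A η) + A L| := by rw [← e]
        _ ≤ |(q η - A η) - (A L - A η)| + |A L| := abs_add_le _ _
        _ ≤ _ := by gcongr; exact abs_sub _ _
    linarith
  have hEn : W / 2 + X2 ≤ D₀ + c * ε * (27 * X2) + 2 * (c * ε) * Q * P + D₁ * Q + X2 / 4 := by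
    rw [← hX2] at hE
    refine hE.trans ?_
    have hpt : ∫ s in (0 : ℝ)..L,
      (c * ε * (ρ s + 2 * |q s| * m s) + M * exp (-(K * s)) * (m s + 4 * π * |q s|))
      ≤ ∫ s in (0 : ℝ)..L, (c * ε * 27 * ρ s + 2 * (c * ε) * Q * m s +
        (4 * π * M * Q + 4 * π * ((1 + 4 * π) * M) ^ 2) * exp (-(K * s)) + 1 / 4 * ρ s) := by
      refine intervalIntegral.integral_mono_on hL0.le (ii _ _ _ (by fun_prop))
        (ii _ _ _ (by fun_prop)) ?_
      intro s hs
      have h1 := hqQ s hs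
      have h2 := hm0 s
      have h3 := hmρ s
      have he0 : 0 < exp (-(K * s)) := exp_pos _
      have he1 : exp (-(K * s)) ≤ 1 := by
        rw [Real.exp_le_one_iff]; have := mul_nonneg hK.le hs.1; linarith
      obtain ⟨e, he⟩ : ∃ e, e = exp (-(K * s)) := ⟨_, rfl⟩
      rw [← he] at he0 he1 ⊢
      have h4 : c * ε * (ρ s + 2 * |q s| * m s) ≤ c * ε * 27 * ρ s + 2 * (c * ε) * Q * m s := by
        have : ρ s + 2 * |q s| * m s ≤ 27 * ρ s + 2 * Q * m s := by
          have : 2 * |q s| * m s ≤ 2 * (Q + m s) * m s := by gcongr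
          nlinarith only [this, h3, hρ0 s, hπ4]
        calc c * ε * (ρ s + 2 * |q s| * m s) ≤ c * ε * (27 * ρ s + 2 * Q * m s) := by gcongr
          _ = _ := by ring
      have h5 : M * e * (m s + 4 * π * |q s|) ≤ M * e * (m s + 4 * π * (Q + m s)) := by gcongr
      have h6 : M * e * (m s + 4 * π * (Q + m s))
          = 4 * π * M * Q * e + ((1 + 4 * π) * M) * e * m s := by ring
      have h7 : ((1 + 4 * π) * M) * e * m s
          ≤ 4 * π * ((1 + 4 * π) * M) ^ 2 * e + 1 / 4 * ρ s := by
        obtain ⟨y, hy⟩ : ∃ y, y = (1 + 4 * π) * M := ⟨_, rfl⟩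
        rw [← hy]
        have hh : y * e * m s ≤ 4 * π * (y * e) ^ 2 + (m s) ^ 2 / (16 * π) := by
          have : 0 ≤ (8 * π * (y * e) - m s) ^ 2 / (16 * π) := by positivity
          have h' : (8 * π * (y * e) - m s) ^ 2 / (16 * π)
            = 4 * π * (y * e) ^ 2 - y * e * m s + (m s) ^ 2 / (16 * π) := by
            field_simp; ring
          linarith
        have h8 : (m s) ^ 2 / (16 * π) ≤ 1 / 4 * ρ s := by
          rw [div_le_iff₀ (by positivity)]; linarith
        have h9 : 4 * π * (y * e) ^ 2 ≤ 4 * π * y ^ 2 * e := by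
          have : e ^ 2 ≤ e := by nlinarith only [he0, he1]
          calc 4 * π * (y * e) ^ 2 = 4 * π * y ^ 2 * e ^ 2 := by ring
            _ ≤ _ := by gcongr
        linarith
      linarith
    have hintg : ∫ s in (0 : ℝ)..L, (c * ε * 27 * ρ s + 2 * (c * ε) * Q * m s +
        (4 * π * M * Q + 4 * π * ((1 + 4 * π) * M) ^ 2) * exp (-(K * s)) + 1 / 4 * ρ s)
        = c * ε * 27 * X2 + 2 * (c * ε) * Q * P + (4 * π * M * Q + 4 * π * ((1 + 4 * π) * M) ^ 2) *
          (∫ s in (0 : ℝ)..L, exp (-(K * s))) + 1 / 4 * X2 := by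
      rw [intervalIntegral.integral_add (ii _ _ _ (by fun_prop)) (ii _ _ _ (by fun_prop)),
        intervalIntegral.integral_add (ii _ _ _ (by fun_prop)) (ii _ _ _ (by fun_prop)),
        intervalIntegral.integral_add (ii _ _ _ (by fun_prop)) (ii _ _ _ (by fun_prop)),
        intervalIntegral.integral_const_mul, intervalIntegral.integral_const_mul,
        intervalIntegral.integral_const_mul, intervalIntegral.integral_const_mul, ← hP, ← hX2]
    have hexp := aux_exp_int K hK 0 L
    simp only [mul_zero, neg_zero, Real.exp_zero] at hexp
    have h10 : (4 * π * M * Q + 4 * π * ((1 + 4 * π) * M) ^ 2) *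
          (∫ s in (0 : ℝ)..L, exp (-(K * s))) ≤
          (4 * π * M * Q + 4 * π * ((1 + 4 * π) * M) ^ 2) * (1 / K) := by gcongr
    have h11 : (4 * π * M * Q + 4 * π * ((1 + 4 * π) * M) ^ 2) * (1 / K)
        = D₁ * Q + 4 * π * ((1 + 4 * π) * M) ^ 2 / K := by rw [hD₁]; ring
    rw [hintg] at hpt
    rw [hD₀]
    linarith
  have hfin : Z ^ 2 / 8 + X ^ 2 / 4 ≤ B := by
    rw [hB]
    refine aux_alg D₀ D₁ c₂ X Z Q hX0 hZ0 hD₁0.le hc₂0.le (by rw [hQ]; linarith) ?_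
    rw [hZZ, hXX]
    refine hEn.trans ?_
    have h1 : c * ε ≤ 1 / 1000 := le_trans (by gcongr) hcκ
    have h2 : c * ε * (27 * X2) ≤ 1 / 1000 * (27 * X2) := by gcongr
    have h3 : 2 * (c * ε) * Q * P ≤ 1 / 100 * X * Q := by
      calc 2 * (c * ε) * Q * P = 2 * c * Q * (ε * P) := by ring
        _ ≤ 2 * c * Q * (4 * κ * X) := mul_le_mul_of_nonneg_left (hεP.trans hεLP) (by positivity)
        _ = 8 * (c * κ) * (X * Q) := by ring
        _ ≤ 8 * (1 / 1000) * (X * Q) := by gcongr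
        _ ≤ 1 / 100 * X * Q := by nlinarith only [mul_nonneg hX0 hQ0]
    linarith
  have hX2B : X2 ≤ 4 * B := by rw [← hXX]; nlinarith only [sq_nonneg Z, hfin]
  constructor
  · have hZ1 : Z ≤ 1 + 2 * B + 0 := by nlinarith only [sq_nonneg X, sq_nonneg (Z - 2), hfin, hB0]
    have hX1 : X ≤ 1 + B := by nlinarith only [sq_nonneg Z, sq_nonneg (X - 2), hfin, hB0]
    have : T ≤ X := by linarith
    rw [hC₁]
    linarith
  · have hpt : ∫ s in (0 : ℝ)..L, (ρ s + 4 * π * (q s - A L) ^ 2)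
      ≤ ∫ s in (0 : ℝ)..L, (ρ s + 12 * π * (4 * π * ρ s + T ^ 2 + c₂ ^ 2 * exp (-(K * s)))) := by
      refine intervalIntegral.integral_mono_on hL0.le (ii _ _ _ (by fun_prop))
        (ii _ _ _ (by fun_prop)) ?_
      intro s hs
      have h1 := hA' s hs
      have h2 := hq s hs
      have he0 : 0 < exp (-(K * s)) := exp_pos _
      have he1 : exp (-(K * s)) ≤ 1 := by
        rw [Real.exp_le_one_iff]; have := mul_nonneg hK.le hs.1; linarith
      obtain ⟨e, he⟩ : ∃ e, e = exp (-(K * s)) := ⟨_, rfl⟩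
      rw [← he] at he0 he1 h1 ⊢
      have h3 : |q s - A L| ≤ m s + T + c₂ * e := by
        have := abs_sub (q s - A s) (A L - A s)
        rw [show q s - A s - (A L - A s) = q s - A L by ring] at this
        linarith
      have h4 : (q s - A L) ^ 2 ≤ (m s + T + c₂ * e) ^ 2 := by
        rw [← sq_abs]; gcongr
      have h5 : (m s + T + c₂ * e) ^ 2 ≤ 3 * (m s ^ 2 + T ^ 2 + (c₂ * e) ^ 2) := by
        nlinarith only [sq_nonneg (m s - T), sq_nonneg (m s - c₂ * e), sq_nonneg (T - c₂ * e)]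
      have h6 : (c₂ * e) ^ 2 ≤ c₂ ^ 2 * e := by
        have : e ^ 2 ≤ e := by nlinarith only [he0, he1]
        rw [mul_pow]; gcongr
      have h7 : (q s - A L) ^ 2 ≤ 3 * (4 * π * ρ s + T ^ 2 + c₂ ^ 2 * e) := by
        linarith [hmρ s]
      have : 4 * π * (q s - A L) ^ 2 ≤ 4 * π * (3 * (4 * π * ρ s + T ^ 2 + c₂ ^ 2 * e)) := by gcongr
      linarith
    have hintg : ∫ s in (0 : ℝ)..L, (ρ s + 12 * π * (4 * π * ρ s + T ^ 2 + c₂ ^ 2 * exp (-(K * s))))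
        = X2 + 12 * π * (4 * π * X2 + T ^ 2 * L + c₂ ^ 2 * ∫ s in (0 : ℝ)..L, exp (-(K * s))) := by
      rw [intervalIntegral.integral_add (ii _ _ _ (by fun_prop)) (ii _ _ _ (by fun_prop)),
        intervalIntegral.integral_const_mul,
        intervalIntegral.integral_add (ii _ _ _ (by fun_prop)) (ii _ _ _ (by fun_prop)),
        intervalIntegral.integral_add (ii _ _ _ (by fun_prop)) (ii _ _ _ (by fun_prop)),
        intervalIntegral.integral_const_mul,
        intervalIntegral.integral_const_mul, intervalIntegral.integral_const, ← hX2]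
      simp; ring
    have hexp := aux_exp_int K hK 0 L
    simp only [mul_zero, neg_zero, Real.exp_zero] at hexp
    have hTL : T ^ 2 * L ≤ (16 * 1) ^ 2 * (4 * B) := by
      calc T ^ 2 * L = 16 * c ^ 2 * ((ε * L * P) ^ 2 * L) := by rw [hT]; ring
        _ ≤ 16 * c ^ 2 * (4 * κ * X) ^ 2 := by gcongr
        _ = (16 * (c * κ)) ^ 2 * X2 := by rw [← hXX]; ring
        _ ≤ (16 * 1) ^ 2 * (4 * B) := by gcongr; linarith
    have h9 : X2 + 12 * π * (4 * π * X2 + T ^ 2 * L + c₂ ^ 2 * ∫ s in (0 : ℝ)..L, exp (-(K * s)))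
        ≤ 4 * B + 12 * π * (4 * π * (4 * B) + (16 * 1) ^ 2 * (4 * B) + c₂ ^ 2 * (1 / K)) := by
      gcongr
    rw [mul_one_div] at h9
    rw [hintg] at hpt
    linarith

/-- The angular bracket. -/
def br (g : ℝ × ℝ → ℝ) : ℝ :=
  ∫ ψ in (-π)..π, ∫ φ in (-(π / 2))..(π / 2), g (φ, ψ) * Real.cos φ

lemma br_cont {X : Type*} [TopologicalSpace X] (G : X → ℝ × ℝ → ℝ)
    (hG : Continuous (fun x : X × ℝ × ℝ => G x.1 x.2)) : Continuous (fun x => br (G x)) := by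
  unfold br
  refine intervalIntegral.continuous_parametric_intervalIntegral_of_continuous' ?_ _ _
  refine intervalIntegral.continuous_parametric_intervalIntegral_of_continuous'
    (f := fun (x : X × ℝ) (φ : ℝ) => G x.1 (φ, x.2) * Real.cos φ) ?_ _ _
  have : Continuous fun z : (X × ℝ) × ℝ => G z.1.1 (z.2, z.1.2) :=
    hG.comp (by fun_prop : Continuous fun z : (X × ℝ) × ℝ => (z.1.1, (z.2, z.1.2)))
  exact this.mul (by fun_prop)

lemma br_inner_ii (g : ℝ × ℝ → ℝ) (hg : Continuous g) (ψ : ℝ) :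
    IntervalIntegrable (fun φ => g (φ, ψ) * Real.cos φ) volume (-(π / 2)) (π / 2) :=
  Continuous.intervalIntegrable (by fun_prop) _ _

lemma br_outer_ii (g : ℝ × ℝ → ℝ) (hg : Continuous g) :
    IntervalIntegrable (fun ψ => ∫ φ in (-(π / 2))..(π / 2), g (φ, ψ) * Real.cos φ)
      volume (-π) π := by
  refine Continuous.intervalIntegrable ?_ _ _
  refine intervalIntegral.continuous_parametric_intervalIntegral_of_continuous' ?_ _ _
  have : Continuous fun z : ℝ × ℝ => g (z.2, z.1) * Real.cos z.2 := by fun_prop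
  exact this

lemma br_add (g k : ℝ × ℝ → ℝ) (hg : Continuous g) (hk : Continuous k) :
    br (fun q => g q + k q) = br g + br k := by
  unfold br
  rw [← intervalIntegral.integral_add (br_outer_ii g hg) (br_outer_ii k hk)]
  congr 1; funext ψ
  rw [← intervalIntegral.integral_add (br_inner_ii g hg ψ) (br_inner_ii k hk ψ)]
  congr 1; funext φ; ring

lemma br_mul (c : ℝ) (g : ℝ × ℝ → ℝ) : br (fun q => c * g q) = c * br g := by
  unfold br
  rw [← intervalIntegral.integral_const_mul]
  congr 1; funext ψ
  rw [← intervalIntegral.integral_const_mul]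
  congr 1; funext φ; ring

lemma br_sub (g k : ℝ × ℝ → ℝ) (hg : Continuous g) (hk : Continuous k) :
    br (fun q => g q - k q) = br g - br k := by
  have h1 : (fun q => g q - k q) = fun q => g q + (-1) * k q := by funext q; ring
  rw [h1, br_add g _ hg (by fun_prop), br_mul]; ring

/-- The angular box. -/
def box : Set (ℝ × ℝ) := Icc (-(π / 2)) (π / 2) ×ˢ Icc (-π) π

lemma br_mono (g k : ℝ × ℝ → ℝ) (hg : Continuous g) (hk : Continuous k)
    (h : ∀ q ∈ box, g q ≤ k q) : br g ≤ br k := by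
  have hπ := Real.pi_pos
  refine intervalIntegral.integral_mono_on (by linarith) (br_outer_ii g hg) (br_outer_ii k hk) ?_
  intro ψ hψ
  refine intervalIntegral.integral_mono_on (by linarith) (br_inner_ii g hg ψ)
    (br_inner_ii k hk ψ) ?_
  intro φ hφ
  exact mul_le_mul_of_nonneg_right (h (φ, ψ) ⟨hφ, hψ⟩) (Real.cos_nonneg_of_mem_Icc hφ)

lemma br_congr (g k : ℝ × ℝ → ℝ) (h : ∀ q ∈ box, g q = k q) : br g = br k := by
  have hπ := Real.pi_pos
  unfold br
  refine intervalIntegral.integral_congr ?_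
  intro ψ hψ
  rw [uIcc_of_le (by linarith)] at hψ
  refine intervalIntegral.integral_congr ?_
  intro φ hφ
  rw [uIcc_of_le (by linarith)] at hφ
  simp only
  rw [h (φ, ψ) ⟨hφ, hψ⟩]

lemma br_abs (g k : ℝ × ℝ → ℝ) (hg : Continuous g) (hk : Continuous k)
    (h : ∀ q ∈ box, |g q| ≤ k q) : |br g| ≤ br k := by
  rw [abs_le]
  constructor
  · have := br_mono (fun q => (-1) * k q) g (by fun_prop) hg
      (fun q hq => by have := neg_le_of_abs_le (h q hq); linarith)
    rw [br_mul] at this; linarith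
  · exact br_mono g k hg hk (fun q hq => le_of_abs_le (h q hq))

lemma br_const (c : ℝ) : br (fun _ => c) = 4 * π * c := by
  unfold br
  simp only [intervalIntegral.integral_const_mul, integral_cos, Real.sin_neg, Real.sin_pi_div_two,
    intervalIntegral.integral_const, smul_eq_mul]
  ring

lemma int_sin_cos : ∫ φ in (-(π / 2))..(π / 2), Real.sin φ * Real.cos φ = 0 := by
  rw [integral_sin_mul_cos₁]; simp

lemma int_sin_sq_cos : ∫ φ in (-(π / 2))..(π / 2), Real.sin φ ^ 2 * Real.cos φ = 2 / 3 := by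
  simp; norm_num

lemma br_F_sin (F : ℝ → ℝ) : br (fun q => F q.2 * Real.sin q.1) = 0 := by
  unfold br
  simp only [mul_assoc, intervalIntegral.integral_const_mul, int_sin_cos]
  simp

lemma br_F_sin_sq (F : ℝ → ℝ) :
    br (fun q => F q.2 * Real.sin q.1 ^ 2) = 2 / 3 * ∫ ψ in (-π)..π, F ψ := by
  unfold br
  simp only [mul_assoc, intervalIntegral.integral_const_mul, int_sin_sq_cos]
  rw [intervalIntegral.integral_mul_const]; ring

lemma br_F (F : ℝ → ℝ) : br (fun q => F q.2) = 2 * ∫ ψ in (-π)..π, F ψ := by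
  unfold br
  simp only [intervalIntegral.integral_const_mul, integral_cos, Real.sin_neg, Real.sin_pi_div_two]
  rw [intervalIntegral.integral_mul_const]; ring

lemma br_odd (g : ℝ × ℝ → ℝ) (h : ∀ q ∈ box, g (-q.1, q.2) = - g q) : br g = 0 := by
  have hπ := Real.pi_pos
  unfold br
  have : ∀ ψ ∈ uIcc (-π) π, ∫ φ in (-(π / 2))..(π / 2), g (φ, ψ) * Real.cos φ = (fun _ => 0) ψ := by
    intro ψ hψ
    rw [uIcc_of_le (by linarith)] at hψ
    have h1 : ∫ φ in (-(π / 2))..(π / 2), g (-φ, ψ) * Real.cos (-φ)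
        = ∫ φ in (-(π / 2))..(π / 2), g (φ, ψ) * Real.cos φ := by
      rw [intervalIntegral.integral_comp_neg (fun φ => g (φ, ψ) * Real.cos φ)]; simp
    have h2 : ∫ φ in (-(π / 2))..(π / 2), g (-φ, ψ) * Real.cos (-φ)
        = ∫ φ in (-(π / 2))..(π / 2), -(g (φ, ψ) * Real.cos φ) := by
      refine intervalIntegral.integral_congr ?_
      intro φ hφ
      rw [uIcc_of_le (by linarith)] at hφ
      have := h (φ, ψ) ⟨hφ, hψ⟩
      simp only at this ⊢
      rw [this, Real.cos_neg]; ring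
    rw [intervalIntegral.integral_neg] at h2
    simp only
    linarith
  rw [intervalIntegral.integral_congr this]
  simp

lemma br_cs (g : ℝ × ℝ → ℝ) (hg : Continuous g) :
    (br fun q => |g q|) ^ 2 ≤ 4 * π * br fun q => g q ^ 2 := by
  have hπ := Real.pi_pos
  obtain ⟨m, hm⟩ : ∃ m, m = br fun q => |g q| := ⟨_, rfl⟩
  obtain ⟨s, hs⟩ : ∃ s, s = br fun q => g q ^ 2 := ⟨_, rfl⟩
  have h0 : br (fun _ => (0 : ℝ)) ≤ br (fun q => (4 * π * |g q| - m) ^ 2) :=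
    br_mono _ _ (by fun_prop) (by fun_prop) (fun q _ => sq_nonneg _)
  have h1 : (fun q => (4 * π * |g q| - m) ^ 2)
      = fun q => ((4 * π) ^ 2 * g q ^ 2 - (8 * π * m) * |g q|) + m ^ 2 := by
    funext q; have := sq_abs (g q); rw [← this]; ring
  rw [h1, br_add _ _ (by fun_prop) (by fun_prop), br_sub _ _ (by fun_prop) (by fun_prop),
    br_mul, br_mul, br_const, br_const, ← hm, ← hs] at h0
  rw [← hm, ← hs]
  have h2 : 0 ≤ 4 * π * (4 * π * s - m ^ 2) := by linarith
  have := nonneg_of_mul_nonneg_right h2 (by positivity)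
  linarith

lemma slice_div (a b : ℝ) (hab : a ≤ b) (G N : ℝ × ℝ → ℝ) (F w w' : ℝ → ℝ)
    (hG : Continuous G) (hN : Continuous N) (hF : Continuous F)
    (hw : ∀ x, HasDerivAt w (w' x) x) (hw' : Continuous w')
    (hd : ∀ η ∈ Ioo a b, ∀ φ ∈ Ioo (-(π / 2)) (π / 2), DifferentiableAt ℝ F η ∧
      ∃ G' : ℝ × ℝ →L[ℝ] ℝ, HasFDerivAt G G' (η, φ) ∧
        Real.sin φ * G' (1, 0) + F η * Real.cos φ * G' (0, 1) = N (η, φ)) :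
    ∫ η in a..b, ∫ φ in (-(π / 2))..(π / 2), (N (η, φ) * w φ
        + F η * G (η, φ) * (Real.cos φ * w' φ - 2 * Real.sin φ * w φ)) * Real.cos φ
      = (∫ φ in (-(π / 2))..(π / 2), G (b, φ) * (w φ * Real.sin φ) * Real.cos φ)
        - ∫ φ in (-(π / 2))..(π / 2), G (a, φ) * (w φ * Real.sin φ) * Real.cos φ := by
  have hπ := Real.pi_pos
  have cw : Continuous w := continuous_iff_continuousAt.2 fun x => (hw x).continuousAt
  let U : Set (ℝ × ℝ) := Ioo a b ×ˢ Ioo (-(π / 2)) (π / 2)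
  let D : ℝ × ℝ → ℝ := fun x => (N x * w x.2
        + F x.1 * G x * (Real.cos x.2 * w' x.2 - 2 * Real.sin x.2 * w x.2)) * Real.cos x.2
  let V1 : ℝ × ℝ → ℝ := fun x => G x * (w x.2 * Real.sin x.2) * Real.cos x.2
  let V2 : ℝ × ℝ → ℝ := fun x => F x.1 * (G x * (w x.2 * Real.cos x.2 ^ 2))
  have key : ∀ x : ℝ × ℝ, ∃ f' g' : ℝ × ℝ →L[ℝ] ℝ, (x ∈ U → HasFDerivAt V1 f' x) ∧
      (x ∈ U → HasFDerivAt V2 g' x) ∧ f' (1, 0) + g' (0, 1) = D x := by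
    rintro ⟨η, φ⟩
    by_cases hx : (η, φ) ∈ U
    · obtain ⟨hFd, G', hG', heq⟩ := hd η hx.1 φ hx.2
      have hs : HasFDerivAt (fun x : ℝ × ℝ => x.2) (ContinuousLinearMap.snd ℝ ℝ ℝ) (η, φ) :=
        hasFDerivAt_snd
      have hf : HasFDerivAt (fun x : ℝ × ℝ => x.1) (ContinuousLinearMap.fst ℝ ℝ ℝ) (η, φ) :=
        hasFDerivAt_fst
      have hws := (hw φ).comp_hasFDerivAt (η, φ) hs
      have hss := (Real.hasDerivAt_sin φ).comp_hasFDerivAt (η, φ) hs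
      have hcs := (Real.hasDerivAt_cos φ).comp_hasFDerivAt (η, φ) hs
      have hFs := (hFd.hasDerivAt).comp_hasFDerivAt (η, φ) hf
      have h1 := (hG'.mul (hws.mul hss)).mul hcs
      have h2 := hFs.mul (hG'.mul (hws.mul (hcs.mul hcs)))
      refine ⟨_, _, fun _ => h1, fun _ => h2.congr_of_eventuallyEq ?_, ?_⟩
      · filter_upwards with x
        simp only [V2, Function.comp, Pi.mul_apply, sq]
      · simp [D, ← heq]
        ring
    · refine ⟨D (η, φ) • ContinuousLinearMap.fst ℝ ℝ ℝ, 0, fun h => absurd h hx,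
        fun h => absurd h hx, ?_⟩
      simp
  choose f' g' hf' hg' hD using key
  have h := integral2_divergence_prod_of_hasFDerivAt V1 V2 f' g' a (-(π / 2)) b (π / 2)
    (Continuous.continuousOn (by fun_prop)) (Continuous.continuousOn (by fun_prop))
    (by
      intro x hx
      rw [min_eq_left hab, max_eq_right hab, min_eq_left (by linarith),
        max_eq_right (by linarith)] at hx
      exact hf' x hx)
    (by
      intro x hx
      rw [min_eq_left hab, max_eq_right hab, min_eq_left (by linarith),
        max_eq_right (by linarith)] at hx
      exact hg' x hx)
    (by
      simp only [hD]
      exact (Continuous.continuousOn (by fun_prop)).integrableOn_compact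
        (isCompact_uIcc.prod isCompact_uIcc))
  simp only [hD] at h
  have e1 : ∀ x, V2 (x, π / 2) = 0 := by intro x; simp [V2]
  have e2 : ∀ x, V2 (x, -(π / 2)) = 0 := by intro x; simp [V2]
  simp only [e1, e2] at h
  simpa [D, V1] using h

lemma br_div (L : ℝ) (G N : ℝ × ℝ × ℝ → ℝ) (F : ℝ × ℝ → ℝ) (w w' : ℝ → ℝ)
    (hG : Continuous G) (hN : Continuous N) (hF : Continuous F)
    (hw : ∀ x, HasDerivAt w (w' x) x) (hw' : Continuous w')
    (hd : ∀ η ∈ Ioo 0 L, ∀ φ ∈ Ioo (-(π / 2)) (π / 2), ∀ ψ ∈ Ioo (-π) π,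
      DifferentiableAt ℝ (fun t => F (t, ψ)) η ∧
      ∃ G' : ℝ × ℝ →L[ℝ] ℝ, HasFDerivAt (fun x : ℝ × ℝ => G (x.1, x.2, ψ)) G' (η, φ) ∧
        Real.sin φ * G' (1, 0) + F (η, ψ) * Real.cos φ * G' (0, 1) = N (η, φ, ψ))
    (a : ℝ) (ha : a ∈ Icc 0 L) :
    br (fun q => G (L, q) * (w q.1 * Real.sin q.1)) - br (fun q => G (a, q) * (w q.1 * Real.sin q.1))
      = ∫ η in a..L, br (fun q => N (η, q) * w q.1
        + F (η, q.2) * G (η, q) * (Real.cos q.1 * w' q.1 - 2 * Real.sin q.1 * w q.1)) := by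
  have hπ := Real.pi_pos
  have cw : Continuous w := continuous_iff_continuousAt.2 fun x => (hw x).continuousAt
  have c1 : ∀ t, Continuous (fun q : ℝ × ℝ => G (t, q) * (w q.1 * Real.sin q.1)) := by
    intro t; fun_prop
  have e1 : br (fun q => G (L, q) * (w q.1 * Real.sin q.1))
      - br (fun q => G (a, q) * (w q.1 * Real.sin q.1))
      = ∫ ψ in (-π)..π, ∫ η in a..L, ∫ φ in (-(π / 2))..(π / 2), (N (η, φ, ψ) * w φ
        + F (η, ψ) * G (η, φ, ψ) * (Real.cos φ * w' φ - 2 * Real.sin φ * w φ)) * Real.cos φ := by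
    unfold br
    rw [← intervalIntegral.integral_sub (br_outer_ii _ (c1 L)) (br_outer_ii _ (c1 a))]
    refine intervalIntegral.integral_congr_Ioo_of_le (by linarith) ?_
    intro ψ hψ
    simp only
    refine (slice_div a L ha.2 (fun x => G (x.1, x.2, ψ)) (fun x => N (x.1, x.2, ψ))
      (fun t => F (t, ψ)) w w' (by fun_prop) (by fun_prop) (by fun_prop) hw hw' ?_).symm
    intro η hη φ hφ
    exact hd η ⟨lt_of_le_of_lt ha.1 hη.1, hη.2⟩ φ hφ ψ hψ
  rw [e1]
  unfold br
  rw [intervalIntegral_intervalIntegral_swap]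
  refine (Continuous.continuousOn ?_).integrableOn_compact
        (isCompact_uIcc.prod isCompact_uIcc) |>.mono_set (prod_mono uIoc_subset_uIcc uIoc_subset_uIcc)
  have : Continuous fun x : ℝ × ℝ => ∫ φ in (-(π / 2))..(π / 2), (N (x.2, φ, x.1) * w φ
        + F (x.2, x.1) * G (x.2, φ, x.1) * (Real.cos φ * w' φ - 2 * Real.sin φ * w φ)) * Real.cos φ := by
    refine intervalIntegral.continuous_parametric_intervalIntegral_of_continuous' ?_ _ _
    have : Continuous fun z : (ℝ × ℝ) × ℝ => (N (z.1.2, z.2, z.1.1) * w z.2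
        + F (z.1.2, z.1.1) * G (z.1.2, z.2, z.1.1) *
          (Real.cos z.2 * w' z.2 - 2 * Real.sin z.2 * w z.2)) * Real.cos z.2 := by fun_prop
    exact this
  exact this
set_option maxHeartbeats 4000000 in
lemma sol_est (c K M : ℝ) (hc : 0 < c) (hK : 0 < K) (hM : 0 < M) :
    ∃ κ > (0 : ℝ), ∃ C > (0 : ℝ), ∀ ε L : ℝ, 0 < ε → 1 ≤ L → ε * L ^ 2 ≤ κ →
    ∀ (f S : ℝ × ℝ × ℝ → ℝ) (F : ℝ × ℝ → ℝ), Continuous f → Continuous S → Continuous F →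
    (∀ x, |F x| ≤ c * ε) →
    (∀ η ∈ Icc 0 L, ∀ x ∈ box, |S (η, x)| ≤ M * exp (-(K * η))) →
    (∀ η ∈ Ioo 0 L, ∀ φ ∈ Ioo (-(π / 2)) (π / 2), ∀ ψ ∈ Ioo (-π) π,
      DifferentiableAt ℝ (fun t => F (t, ψ)) η ∧
      ∃ G' : ℝ × ℝ →L[ℝ] ℝ, HasFDerivAt (fun x : ℝ × ℝ => f (x.1, x.2, ψ)) G' (η, φ) ∧
        Real.sin φ * G' (1, 0) + F (η, ψ) * Real.cos φ * G' (0, 1)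
          = S (η, φ, ψ) - (f (η, φ, ψ) - 1 / (4 * π) * br (fun x => f (η, x)))) →
    (∀ x ∈ box, 0 < Real.sin x.1 → |f (0, x)| ≤ M) →
    (∀ x : ℝ × ℝ, x ∈ box → f (L, -x.1, x.2) = f (L, x)) →
    |3 / (4 * π) * br (fun x => f (L, x) * (Real.sin x.1 * Real.sin x.1))| ≤ C ∧
    ∫ η in (0 : ℝ)..L, br (fun x => (f (η, x)
      - 3 / (4 * π) * br (fun x => f (L, x) * (Real.sin x.1 * Real.sin x.1))) ^ 2) ≤ C := by
  obtain ⟨κ, hκ, C, hC, hcore⟩ := core_real c K M hc hK hM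
  refine ⟨κ, hκ, C, hC, ?_⟩
  intro ε L hε hL hεL f S F cf cS cF hF hS hd hin href
  have hπ := Real.pi_pos
  have hπ3 := Real.pi_gt_three
  have hL0 : 0 < L := by linarith
  obtain ⟨q, hq⟩ : ∃ q : ℝ → ℝ, q = fun η => 1 / (4 * π) * br (fun x => f (η, x)) := ⟨_, rfl⟩
  have cq : Continuous q := by
    rw [hq]; exact continuous_const.mul (br_cont (fun η x => f (η, x)) cf)
  have hqd : ∀ η, 1 / (4 * π) * br (fun x => f (η, x)) = q η := by intro η; rw [hq]
  simp only [hqd] at hd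
  have hbf : ∀ η, br (fun x => f (η, x)) = 4 * π * q η := by
    intro η; rw [← hqd]; field_simp
  have brr : ∀ η, br (fun x => f (η, x) - q η) = 0 := by
    intro η
    rw [br_sub _ _ (by fun_prop) (by fun_prop), hbf, br_const]; ring
  obtain ⟨ρ, hρ⟩ : ∃ ρ : ℝ → ℝ, ∀ η, ρ η = br (fun x => (f (η, x) - q η) ^ 2) :=
    ⟨_, fun _ => rfl⟩
  obtain ⟨m, hm⟩ : ∃ m : ℝ → ℝ, ∀ η, m η = br (fun x => |f (η, x) - q η|) :=
    ⟨_, fun _ => rfl⟩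
  obtain ⟨J, hJ⟩ : ∃ J : ℝ → ℝ, ∀ η, J η = br (fun x => f (η, x) * (1 * Real.sin x.1)) :=
    ⟨_, fun _ => rfl⟩
  obtain ⟨A, hA⟩ : ∃ A : ℝ → ℝ,
      ∀ η, A η = 3 / (4 * π) * br (fun x => f (η, x) * (Real.sin x.1 * Real.sin x.1)) :=
    ⟨_, fun _ => rfl⟩
  have cρ : Continuous ρ := by
    rw [funext hρ]; exact br_cont (fun η x => (f (η, x) - q η) ^ 2) (by fun_prop)
  have cm : Continuous m := by
    rw [funext hm]; exact br_cont (fun η x => |f (η, x) - q η|) (by fun_prop)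
  have cJ : Continuous J := by
    rw [funext hJ]; exact br_cont (fun η x => f (η, x) * (1 * Real.sin x.1)) (by fun_prop)
  have cA : Continuous A := by
    rw [funext hA]
    exact continuous_const.mul
      (br_cont (fun η x => f (η, x) * (Real.sin x.1 * Real.sin x.1)) (by fun_prop))
  have hm0 : ∀ η, 0 ≤ m η := by
    intro η
    have := br_mono (fun _ => 0) (fun x => |f (η, x) - q η|) (by fun_prop) (by fun_prop)
      (fun x _ => abs_nonneg _)
    rw [br_const, ← hm] at this; linarith
  have hmρ : ∀ η, m η ^ 2 ≤ 4 * π * ρ η := by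
    intro η; rw [hm, hρ]; exact br_cs (fun x => f (η, x) - q η) (by fun_prop)
  have ii : ∀ (g : ℝ → ℝ) (a b : ℝ), Continuous g → IntervalIntegrable g volume a b :=
    fun g a b h => h.intervalIntegrable a b
  have sin1 : ∀ x : ℝ, |Real.sin x| ≤ 1 := Real.abs_sin_le_one
  -- first moment bound
  have bJ : ∀ η ∈ Icc 0 L, |br (fun x => (S (η, x) - (f (η, x) - q η)) * 1
        + F (η, x.2) * f (η, x) * (Real.cos x.1 * 0 - 2 * Real.sin x.1 * 1))|
        ≤ 2 * (c * ε) * m η + 4 * π * M * exp (-(K * η)) := by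
    intro η hη
    have e : (fun x : ℝ × ℝ => (S (η, x) - (f (η, x) - q η)) * 1
        + F (η, x.2) * f (η, x) * (Real.cos x.1 * 0 - 2 * Real.sin x.1 * 1))
        = fun x => ((S (η, x) - 2 * (F (η, x.2) * (f (η, x) - q η) * Real.sin x.1))
          + (-1) * (f (η, x) - q η)) + (-2 * q η * F (η, x.2)) * Real.sin x.1 := by
      funext x; ring
    rw [e, br_add _ _ (by fun_prop) (by fun_prop), br_add _ _ (by fun_prop) (by fun_prop),
      br_mul, brr, br_F_sin (fun ψ => -2 * q η * F (η, ψ)), mul_zero, add_zero, add_zero]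
    have := br_abs (fun x : ℝ × ℝ => S (η, x) - 2 * (F (η, x.2) * (f (η, x) - q η) * Real.sin x.1))
      (fun x => 2 * (c * ε) * |f (η, x) - q η| + M * exp (-(K * η))) (by fun_prop) (by fun_prop) (by
        intro x hx
        have h1 := hS η hη x hx
        have h2 : |F (η, x.2) * (f (η, x) - q η) * Real.sin x.1|
            ≤ c * ε * |f (η, x) - q η| * 1 := by
          rw [abs_mul, abs_mul]
          have := hF (η, x.2)
          have := sin1 x.1
          gcongr
        have h3 := abs_sub (S (η, x)) (2 * (F (η, x.2) * (f (η, x) - q η) * Real.sin x.1))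
        rw [abs_mul 2, abs_two] at h3
        linarith)
    refine this.trans (le_of_eq ?_)
    rw [br_add _ _ (by fun_prop) (by fun_prop), br_mul, br_const, ← hm]; ring
  have hJL : J L = 0 := by
    rw [hJ]
    refine br_odd _ ?_
    intro x hx
    simp only
    rw [href x hx, Real.sin_neg]; ring
  have hJ1 : ∀ η ∈ Icc 0 L, |J η| ≤
      ∫ s in η..L, (2 * (c * ε) * m s + 4 * π * M * exp (-(K * s))) := by
    intro a ha
    have hid := br_div L f (fun p => S p - (f p - q p.1)) F (fun _ => 1) (fun _ => 0) cf
      (by fun_prop) cF (fun x => hasDerivAt_const x 1) continuous_const hd a ha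
    simp only at hid
    rw [← hJ, ← hJ, hJL, zero_sub] at hid
    rw [← abs_neg, hid]
    have h1 : Continuous fun η => br (fun x => (S (η, x) - (f (η, x) - q η)) * 1
        + F (η, x.2) * f (η, x) * (Real.cos x.1 * 0 - 2 * Real.sin x.1 * 1)) :=
      br_cont (fun η x => (S (η, x) - (f (η, x) - q η)) * 1
        + F (η, x.2) * f (η, x) * (Real.cos x.1 * 0 - 2 * Real.sin x.1 * 1)) (by fun_prop)
    refine (intervalIntegral.abs_integral_le_integral_abs ha.2).trans ?_
    refine intervalIntegral.integral_mono_on ha.2 (ii _ _ _ h1.abs)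
      (ii _ _ _ (by fun_prop)) ?_
    intro s hs
    exact bJ s ⟨ha.1.trans hs.1, hs.2⟩
  -- second moment
  have bA : ∀ η ∈ Icc 0 L, |br (fun x => (S (η, x) - (f (η, x) - q η)) * Real.sin x.1
        + F (η, x.2) * f (η, x) * (Real.cos x.1 * Real.cos x.1 - 2 * Real.sin x.1 * Real.sin x.1))|
        ≤ |J η| + 4 * π * M * exp (-(K * η)) + 2 * (c * ε) * m η := by
    intro η hη
    have e : (fun x : ℝ × ℝ => (S (η, x) - (f (η, x) - q η)) * Real.sin x.1
        + F (η, x.2) * f (η, x) * (Real.cos x.1 * Real.cos x.1 - 2 * Real.sin x.1 * Real.sin x.1))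
        = fun x => ((((S (η, x) * Real.sin x.1
            + F (η, x.2) * (f (η, x) - q η) * (1 - 3 * Real.sin x.1 ^ 2))
          + (-1) * (f (η, x) * (1 * Real.sin x.1))) + q η * Real.sin x.1)
          + q η * F (η, x.2)) + (-3 * q η * F (η, x.2)) * Real.sin x.1 ^ 2 := by
      funext x
      have := Real.sin_sq_add_cos_sq x.1
      have h : Real.cos x.1 * Real.cos x.1 = 1 - Real.sin x.1 ^ 2 := by linarith
      rw [h]; ring
    rw [e, br_add _ _ (by fun_prop) (by fun_prop), br_add _ _ (by fun_prop) (by fun_prop),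
      br_add _ _ (by fun_prop) (by fun_prop), br_add _ _ (by fun_prop) (by fun_prop),
      br_mul (-1), ← hJ, br_F_sin (fun _ => q η), br_F (fun ψ => q η * F (η, ψ)),
      br_F_sin_sq (fun ψ => -3 * q η * F (η, ψ)), intervalIntegral.integral_const_mul,
      intervalIntegral.integral_const_mul]
    have := br_abs (fun x : ℝ × ℝ => S (η, x) * Real.sin x.1
            + F (η, x.2) * (f (η, x) - q η) * (1 - 3 * Real.sin x.1 ^ 2))
      (fun x => 2 * (c * ε) * |f (η, x) - q η| + M * exp (-(K * η))) (by fun_prop) (by fun_prop) (by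
        intro x hx
        have h1 := hS η hη x hx
        have h2 : |F (η, x.2) * (f (η, x) - q η) * (1 - 3 * Real.sin x.1 ^ 2)|
            ≤ c * ε * |f (η, x) - q η| * 2 := by
          rw [abs_mul, abs_mul]
          have := hF (η, x.2)
          have : |1 - 3 * Real.sin x.1 ^ 2| ≤ 2 := by
            have h1 := Real.sin_sq_le_one x.1
            have h2 := sq_nonneg (Real.sin x.1)
            rw [abs_le]; constructor <;> linarith
          gcongr
        have h3 := abs_add_le (S (η, x) * Real.sin x.1)
          (F (η, x.2) * (f (η, x) - q η) * (1 - 3 * Real.sin x.1 ^ 2))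
        have h4 : |S (η, x) * Real.sin x.1| ≤ |S (η, x)| := by
          rw [abs_mul]; exact mul_le_of_le_one_right (abs_nonneg _) (sin1 _)
        linarith)
    rw [br_add (fun x => 2 * (c * ε) * |f (η, x) - q η|) _ (by fun_prop) (by fun_prop), br_mul,
      br_const, ← hm] at this
    obtain ⟨u, hu⟩ : ∃ u, u = br (fun x : ℝ × ℝ => S (η, x) * Real.sin x.1
            + F (η, x.2) * (f (η, x) - q η) * (1 - 3 * Real.sin x.1 ^ 2)) := ⟨_, rfl⟩
    rw [← hu] at this ⊢
    obtain ⟨v, hv⟩ : ∃ v, v = ∫ ψ in (-π)..π, F (η, ψ) := ⟨_, rfl⟩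
    rw [← hv]
    have e2 : u + -1 * J η + 0 + 2 * (q η * v) + 2 / 3 * (-3 * q η * v) = u - J η := by ring
    rw [e2]
    have := abs_sub u (J η)
    linarith
  have hA1 : ∀ η ∈ Icc 0 L, |A L - A η| ≤
      ∫ s in η..L, (|J s| + 4 * π * M * exp (-(K * s)) + 2 * (c * ε) * m s) := by
    intro a ha
    have hid := br_div L f (fun p => S p - (f p - q p.1)) F Real.sin Real.cos cf
      (by fun_prop) cF Real.hasDerivAt_sin Real.continuous_cos hd a ha
    simp only at hid
    rw [hA, hA, ← mul_sub, hid, abs_mul]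
    have h1 : Continuous fun η => br (fun x => (S (η, x) - (f (η, x) - q η)) * Real.sin x.1
        + F (η, x.2) * f (η, x) *
          (Real.cos x.1 * Real.cos x.1 - 2 * Real.sin x.1 * Real.sin x.1)) :=
      br_cont (fun η x => (S (η, x) - (f (η, x) - q η)) * Real.sin x.1
        + F (η, x.2) * f (η, x) *
          (Real.cos x.1 * Real.cos x.1 - 2 * Real.sin x.1 * Real.sin x.1)) (by fun_prop)
    have h2 : |3 / (4 * π)| ≤ 1 := by
      rw [abs_of_nonneg (by positivity), div_le_one (by positivity)]; linarith
    refine (mul_le_of_le_one_left (abs_nonneg _) h2).trans ?_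
    refine (intervalIntegral.abs_integral_le_integral_abs ha.2).trans ?_
    refine intervalIntegral.integral_mono_on ha.2 (ii _ _ _ h1.abs)
      (ii _ _ _ (by fun_prop)) ?_
    intro s hs
    exact bA s ⟨ha.1.trans hs.1, hs.2⟩
  have hqA : ∀ η ∈ Icc 0 L, |q η - A η| ≤ m η := by
    intro η _
    have e : (fun x : ℝ × ℝ => f (η, x) * (Real.sin x.1 * Real.sin x.1))
        = fun x => (f (η, x) - q η) * Real.sin x.1 ^ 2 + q η * Real.sin x.1 ^ 2 := by
      funext x; ring
    rw [hA, e, br_add _ _ (by fun_prop) (by fun_prop), br_F_sin_sq (fun _ => q η),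
      intervalIntegral.integral_const, smul_eq_mul]
    have h1 := br_abs (fun x : ℝ × ℝ => (f (η, x) - q η) * Real.sin x.1 ^ 2)
      (fun x => |f (η, x) - q η|) (by fun_prop) (by fun_prop) (by
        intro x _
        rw [abs_mul]
        refine mul_le_of_le_one_right (abs_nonneg _) ?_
        rw [abs_of_nonneg (sq_nonneg _)]; exact Real.sin_sq_le_one _)
    rw [← hm] at h1
    obtain ⟨u, hu⟩ : ∃ u, u = br (fun x : ℝ × ℝ => (f (η, x) - q η) * Real.sin x.1 ^ 2) := ⟨_, rfl⟩
    rw [← hu] at h1 ⊢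
    have e2 : q η - 3 / (4 * π) * (u + 2 / 3 * ((π - -π) * q η)) = -(3 / (4 * π) * u) := by
      field_simp; ring
    rw [e2, abs_neg, abs_mul]
    have h2 : |3 / (4 * π)| ≤ 1 := by
      rw [abs_of_nonneg (by positivity), div_le_one (by positivity)]; linarith
    exact (mul_le_of_le_one_left (abs_nonneg _) h2).trans h1
  -- boundary term
  obtain ⟨W, hW⟩ : ∃ W, W = br (fun x => f (0, x) ^ 2 * |Real.sin x.1|) := ⟨_, rfl⟩
  have hW0 : 0 ≤ W := by
    have := br_mono (fun _ => 0) (fun x : ℝ × ℝ => f (0, x) ^ 2 * |Real.sin x.1|)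
      (by fun_prop) (by fun_prop) (fun x _ => by positivity)
    rw [br_const, ← hW] at this; linarith
  have hA0 : A 0 ^ 2 ≤ W := by
    have h1 := br_cs (fun x => f (0, x) * Real.sin x.1) (by fun_prop)
    have h2 : br (fun x => (f (0, x) * Real.sin x.1) ^ 2) ≤ W := by
      rw [hW]
      refine br_mono _ _ (by fun_prop) (by fun_prop) ?_
      intro x _
      rw [mul_pow]
      have : Real.sin x.1 ^ 2 ≤ |Real.sin x.1| := by
        rw [← sq_abs, sq]; exact mul_le_of_le_one_right (abs_nonneg _) (sin1 _)
      gcongr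
    have h3 := br_abs (fun x : ℝ × ℝ => f (0, x) * (Real.sin x.1 * Real.sin x.1))
      (fun x => |f (0, x) * Real.sin x.1|) (by fun_prop) (by fun_prop) (by
        intro x _
        rw [← mul_assoc, abs_mul]
        exact mul_le_of_le_one_right (abs_nonneg _) (sin1 _))
    rw [hA, mul_pow]
    have h4 : br (fun x : ℝ × ℝ => f (0, x) * (Real.sin x.1 * Real.sin x.1)) ^ 2
        ≤ 4 * π * W := by
      rw [← sq_abs]
      calc _ ≤ (br (fun x : ℝ × ℝ => |f (0, x) * Real.sin x.1|)) ^ 2 := by gcongr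
        _ ≤ _ := h1
        _ ≤ 4 * π * W := by gcongr
    calc _ ≤ (3 / (4 * π)) ^ 2 * (4 * π * W) := by gcongr
      _ = 9 / (4 * π) * W := by field_simp; ring
      _ ≤ 1 * W := by
        gcongr
        rw [div_le_one (by positivity)]; linarith
      _ = W := one_mul W
  have hE0 : br (fun x => f (0, x) ^ 2 * (1 * Real.sin x.1)) ≤ 8 * π * M ^ 2 - W := by
    have h1 := br_mono (fun x : ℝ × ℝ => f (0, x) ^ 2 * (1 * Real.sin x.1))
      (fun x => 2 * M ^ 2 - f (0, x) ^ 2 * |Real.sin x.1|) (by fun_prop) (by fun_prop) (by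
        intro x hx
        by_cases hs : 0 < Real.sin x.1
        · have h2 := hin x hx hs
          have h3 : f (0, x) ^ 2 ≤ M ^ 2 := by rw [← sq_abs]; gcongr
          have h4 : f (0, x) ^ 2 * Real.sin x.1 ≤ M ^ 2 * 1 := by
            have := Real.sin_le_one x.1
            gcongr
          rw [abs_of_pos hs]; linarith
        · push Not at hs
          rw [abs_of_nonpos hs]
          have : 0 ≤ M ^ 2 := sq_nonneg _
          linarith)
    rw [br_sub _ _ (by fun_prop) (by fun_prop), br_const, ← hW] at h1
    linarith
  have hEL : br (fun x => f (L, x) ^ 2 * (1 * Real.sin x.1)) = 0 := by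
    refine br_odd _ ?_
    intro x hx
    simp only
    rw [href x hx, Real.sin_neg]; ring
  obtain ⟨U, hU⟩ : ∃ U : ℝ → ℝ, ∀ η, U η = br (fun x => f (η, x) * S (η, x)
      - F (η, x.2) * ((f (η, x) - q η) ^ 2 + 2 * q η * (f (η, x) - q η)) * Real.sin x.1) :=
    ⟨_, fun _ => rfl⟩
  have cU : Continuous U := by
    rw [funext hU]
    exact br_cont (fun η x => f (η, x) * S (η, x)
      - F (η, x.2) * ((f (η, x) - q η) ^ 2 + 2 * q η * (f (η, x) - q η)) * Real.sin x.1)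
      (by fun_prop)
  have bU : ∀ η ∈ Icc 0 L, U η ≤ c * ε * (ρ η + 2 * |q η| * m η)
      + M * exp (-(K * η)) * (m η + 4 * π * |q η|) := by
    intro η hη
    have h0 := br_mono (fun x : ℝ × ℝ => f (η, x) * S (η, x)
      - F (η, x.2) * ((f (η, x) - q η) ^ 2 + 2 * q η * (f (η, x) - q η)) * Real.sin x.1)
      (fun x => (c * ε * (f (η, x) - q η) ^ 2
        + (c * ε * (2 * |q η|) + M * exp (-(K * η))) * |f (η, x) - q η|)
        + M * exp (-(K * η)) * |q η|) (by fun_prop) (by fun_prop) (by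
        intro x hx
        have h1 := hS η hη x hx
        have h2 : |F (η, x.2) * ((f (η, x) - q η) ^ 2 + 2 * q η * (f (η, x) - q η)) * Real.sin x.1|
            ≤ c * ε * ((f (η, x) - q η) ^ 2 + 2 * |q η| * |f (η, x) - q η|) * 1 := by
          rw [abs_mul, abs_mul]
          have := hF (η, x.2)
          have := sin1 x.1
          have h3 : |(f (η, x) - q η) ^ 2 + 2 * q η * (f (η, x) - q η)|
              ≤ (f (η, x) - q η) ^ 2 + 2 * |q η| * |f (η, x) - q η| := by
            refine (abs_add_le _ _).trans (le_of_eq ?_)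
            rw [abs_of_nonneg (sq_nonneg _), abs_mul, abs_mul, abs_two]
          gcongr
        have h4 : f (η, x) * S (η, x) ≤ (|f (η, x) - q η| + |q η|) * (M * exp (-(K * η))) := by
          have h5 : |f (η, x)| ≤ |f (η, x) - q η| + |q η| := by
            have := abs_add_le (f (η, x) - q η) (q η); simpa using this
          calc f (η, x) * S (η, x) ≤ |f (η, x) * S (η, x)| := le_abs_self _
            _ = |f (η, x)| * |S (η, x)| := abs_mul _ _
            _ ≤ _ := by gcongr
        have h6 := neg_le_of_abs_le h2
        linarith)
    rw [← hU, br_add _ _ (by fun_prop) (by fun_prop), br_add _ _ (by fun_prop) (by fun_prop),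
      br_mul, br_mul, br_const, ← hm, ← hρ] at h0
    linarith
  have hEn : W / 2 + ∫ s in (0 : ℝ)..L, ρ s ≤ 4 * π * M ^ 2 + ∫ s in (0 : ℝ)..L,
      (c * ε * (ρ s + 2 * |q s| * m s) + M * exp (-(K * s)) * (m s + 4 * π * |q s|)) := by
    have hid := br_div L (fun p => f p ^ 2) (fun p => 2 * f p * (S p - (f p - q p.1))) F
      (fun _ => 1) (fun _ => 0) (by fun_prop)
      (by fun_prop) cF (fun x => hasDerivAt_const x 1) continuous_const (by
        intro η hη φ hφ ψ hψ
        obtain ⟨h1, G', h2, h3⟩ := hd η hη φ hφ ψ hψ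
        refine ⟨h1, _, h2.pow 2, ?_⟩
        rw [← h3]
        simp
        ring) 0 ⟨le_rfl, hL0.le⟩
    simp only at hid
    rw [hEL] at hid
    have e : ∀ η, br (fun x => 2 * f (η, x) * (S (η, x) - (f (η, x) - q η)) * 1
        + F (η, x.2) * f (η, x) ^ 2 * (Real.cos x.1 * 0 - 2 * Real.sin x.1 * 1))
        = 2 * U η - 2 * ρ η := by
      intro η
      have e : (fun x : ℝ × ℝ => 2 * f (η, x) * (S (η, x) - (f (η, x) - q η)) * 1
        + F (η, x.2) * f (η, x) ^ 2 * (Real.cos x.1 * 0 - 2 * Real.sin x.1 * 1))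
        = fun x => ((2 * (f (η, x) * S (η, x)
      - F (η, x.2) * ((f (η, x) - q η) ^ 2 + 2 * q η * (f (η, x) - q η)) * Real.sin x.1)
        + (-2) * (f (η, x) - q η) ^ 2) + (-2 * q η) * (f (η, x) - q η))
        + (-2 * q η ^ 2 * F (η, x.2)) * Real.sin x.1 := by
        funext x; ring
      rw [e, br_add _ _ (by fun_prop) (by fun_prop), br_add _ _ (by fun_prop) (by fun_prop),
        br_add _ _ (by fun_prop) (by fun_prop), br_mul, br_mul, br_mul, brr,
        br_F_sin (fun ψ => -2 * q η ^ 2 * F (η, ψ)), ← hU, ← hρ]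
      ring
    simp only [e] at hid
    rw [intervalIntegral.integral_sub (ii _ _ _ (by fun_prop)) (ii _ _ _ (by fun_prop)),
      intervalIntegral.integral_const_mul, intervalIntegral.integral_const_mul] at hid
    have h1 : ∫ s in (0 : ℝ)..L, U s ≤ ∫ s in (0 : ℝ)..L,
      (c * ε * (ρ s + 2 * |q s| * m s) + M * exp (-(K * s)) * (m s + 4 * π * |q s|)) :=
      intervalIntegral.integral_mono_on hL0.le (ii _ _ _ cU) (ii _ _ _ (by fun_prop)) bU
    linarith
  have hfin := hcore ε L W hε hL hεL hW0 ρ m J A q cρ cm cJ cA cq hm0 hmρ hJ1 hA1 hqA hA0 hEn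
  rw [← hA]
  refine ⟨hfin.1, (le_of_eq ?_).trans hfin.2⟩
  congr 1
  funext η
  have e : (fun x : ℝ × ℝ => (f (η, x) - A L) ^ 2)
      = fun x => ((f (η, x) - q η) ^ 2 + (2 * (q η - A L)) * (f (η, x) - q η))
        + (q η - A L) ^ 2 := by
    funext x; ring
  rw [e, br_add _ _ (by fun_prop) (by fun_prop), br_add _ _ (by fun_prop) (by fun_prop),
    br_mul, brr, br_const, ← hρ]
  ring

/-- Clamping to an interval. -/
def clampI (a b x : ℝ) : ℝ := max a (min b x)

lemma clampI_cont (a b : ℝ) : Continuous (clampI a b) := by unfold clampI; fun_prop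

lemma clampI_mem (a b x : ℝ) (h : a ≤ b) : clampI a b x ∈ Icc a b :=
  ⟨le_max_left _ _, max_le h (min_le_left _ _)⟩

lemma clampI_eq (a b x : ℝ) (h : x ∈ Icc a b) : clampI a b x = x := by
  unfold clampI; rw [min_eq_right h.2, max_eq_right h.1]

/-- Clamping to the domain. -/
def clampD (L : ℝ) (p : ℝ × ℝ × ℝ) : ℝ × ℝ × ℝ :=
  (clampI 0 L p.1, clampI (-(π / 2)) (π / 2) p.2.1, clampI (-π) π p.2.2)

lemma clampD_cont (L : ℝ) : Continuous (clampD L) := by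
  have h1 := clampI_cont 0 L
  have h2 := clampI_cont (-(π / 2)) (π / 2)
  have h3 := clampI_cont (-π) π
  unfold clampD; fun_prop

lemma clampD_mem (L : ℝ) (hL : 0 ≤ L) (p : ℝ × ℝ × ℝ) : clampD L p ∈ milneDomain L := by
  have hπ := Real.pi_pos
  exact ⟨clampI_mem _ _ _ hL, clampI_mem _ _ _ (by linarith), clampI_mem _ _ _ (by linarith)⟩

lemma clampD_eq (L : ℝ) (p : ℝ × ℝ × ℝ) (h : p ∈ milneDomain L) : clampD L p = p := by
  obtain ⟨h1, h2, h3⟩ := h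
  unfold clampD
  rw [clampI_eq _ _ _ h1, clampI_eq _ _ _ h2, clampI_eq _ _ _ h3]

lemma clampD_comp_cont (L : ℝ) (hL : 0 ≤ L) (f : ℝ × ℝ × ℝ → ℝ)
    (hf : ContinuousOn f (milneDomain L)) : Continuous (fun p => f (clampD L p)) :=
  hf.comp_continuous (clampD_cont L) (clampD_mem L hL)

lemma mem_interior_dom (L η φ ψ : ℝ) (hη : η ∈ Ioo 0 L) (hφ : φ ∈ Ioo (-(π / 2)) (π / 2))
    (hψ : ψ ∈ Ioo (-π) π) : (η, φ, ψ) ∈ interior (milneDomain L) := by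
  unfold milneDomain
  rw [interior_prod_eq, interior_prod_eq, interior_Icc, interior_Icc, interior_Icc]
  exact ⟨hη, hφ, hψ⟩

lemma exists_eps (n κ : ℝ) (hn : n ∈ Ioo (0 : ℝ) (1 / 2)) (hκ : 0 < κ) :
    ∃ ε₀ ∈ Ioo (0 : ℝ) 1, ∀ ε ∈ Ioc (0 : ℝ) ε₀,
      1 ≤ layerL ε n ∧ ε * layerL ε n ^ 2 ≤ κ := by
  have hn' : 0 < 1 - 2 * n := by linarith [hn.2]
  refine ⟨min (1 / 2) (κ ^ (1 / (1 - 2 * n))), ⟨by positivity, ?_⟩, ?_⟩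
  · exact lt_of_le_of_lt (min_le_left _ _) (by norm_num)
  · intro ε hε
    have h1 : ε ≤ 1 / 2 := hε.2.trans (min_le_left _ _)
    have h2 : ε ≤ κ ^ (1 / (1 - 2 * n)) := hε.2.trans (min_le_right _ _)
    have h0 := hε.1
    unfold layerL
    constructor
    · exact Real.one_le_rpow_of_pos_of_le_one_of_nonpos h0 (by linarith) (by linarith [hn.1])
    · have e : ε * (ε ^ (-n)) ^ 2 = ε ^ (1 - 2 * n) := by
        rw [← Real.rpow_natCast, ← Real.rpow_mul h0.le]
        nth_rewrite 1 [← Real.rpow_one ε]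
        rw [← Real.rpow_add h0]
        congr 1; push_cast; ring
      rw [e]
      calc ε ^ (1 - 2 * n) ≤ (κ ^ (1 / (1 - 2 * n))) ^ (1 - 2 * n) :=
            Real.rpow_le_rpow h0.le h2 hn'.le
        _ = κ := by
            rw [← Real.rpow_mul hκ.le, one_div, inv_mul_cancel₀ hn'.ne', Real.rpow_one]

/-- Theorem "Milne LT Theorem": a priori `L²` estimate for the
ε-Milne problem with geometric correction. -/
theorem milne_L2_estimate (R₁ R₂ n K M : ℝ) (hR₁ : 0 < R₁) (hR₂ : 0 < R₂)
    (hn : n ∈ Ioo (0 : ℝ) (1 / 2)) (hK : 0 < K) (hM : 0 < M) :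
    ∃ ε₀ ∈ Ioo (0 : ℝ) 1, ∃ C > (0 : ℝ),
      ∀ ε ∈ Ioc (0 : ℝ) ε₀, ∀ h : ℝ → ℝ → ℝ, ∀ S f : ℝ × ℝ × ℝ → ℝ,
        DataBounds K M (layerL ε n) h S → IsMilneSolution R₁ R₂ ε n h S f →
        |limitValue (layerL ε n) f| ≤ C ∧
        l2Norm (layerL ε n) (fun p => f p - limitValue (layerL ε n) f) ≤ C := by
  obtain ⟨κ, hκ, C, hC, hmain⟩ := sol_est (2 / R₁ + 2 / R₂) K M (by positivity) hK hM
  obtain ⟨ε₀, hε₀, hε₀'⟩ := exists_eps n (min κ (min (R₁ / 2) (R₂ / 2))) hn (by positivity)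
  refine ⟨ε₀, hε₀, C + 1, by positivity, ?_⟩
  intro ε hε h S f hdata hsol
  obtain ⟨hL, hεL⟩ := hε₀' ε hε
  have hπ := Real.pi_pos
  have hε0 := hε.1
  have hεκ : ε * layerL ε n ^ 2 ≤ κ := hεL.trans (min_le_left _ _)
  have hsm := hsol.smooth
  have heqn := hsol.eqn
  have hinf := hsol.inflow
  have hrefl := hsol.reflect
  have hsS := hdata.sSmooth
  have hsB := hdata.sBound
  have hhB := hdata.hBound
  generalize layerL ε n = L at *
  have hL0 : 0 < L := by linarith
  have hεL1 : ε * L ≤ ε * L ^ 2 := by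
    have : L ≤ L ^ 2 := by nlinarith
    gcongr
  have hR1 : ε * L ≤ R₁ / 2 :=
    hεL1.trans (hεL.trans ((min_le_right _ _).trans (min_le_left _ _)))
  have hR2 : ε * L ≤ R₂ / 2 :=
    hεL1.trans (hεL.trans ((min_le_right _ _).trans (min_le_right _ _)))
  have den1 : ∀ η ∈ Icc 0 L, R₁ / 2 ≤ R₁ - ε * η := by
    intro η hη
    have : ε * η ≤ ε * L := mul_le_mul_of_nonneg_left hη.2 hε0.le
    linarith
  have den2 : ∀ η ∈ Icc 0 L, R₂ / 2 ≤ R₂ - ε * η := by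
    intro η hη
    have : ε * η ≤ ε * L := mul_le_mul_of_nonneg_left hη.2 hε0.le
    linarith
  have ccl := clampI_cont 0 L
  have mcl : ∀ x, clampI 0 L x ∈ Icc 0 L := fun x => clampI_mem 0 L x hL0.le
  have agree : ∀ p ∈ milneDomain L, f (clampD L p) = f p := by
    intro p hp; rw [clampD_eq L p hp]
  have havg : ∀ η ∈ Icc 0 L, 1 / (4 * π) * br (fun x => f (clampD L (η, x))) = angAvg f η := by
    intro η hη
    unfold angAvg
    congr 1
    refine (br_congr _ (fun x => f (η, x)) ?_)
    intro x hx
    exact agree _ ⟨hη, hx.1, hx.2⟩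
  have hlim : 3 / (4 * π) * br (fun x => f (clampD L (L, x)) * (Real.sin x.1 * Real.sin x.1))
      = limitValue L f := by
    unfold limitValue
    congr 1
    refine (br_congr _ (fun x => f (L, x) * Real.sin x.1 ^ 2) ?_)
    intro x hx
    rw [agree _ ⟨⟨hL0.le, le_rfl⟩, hx.1, hx.2⟩]; ring
  have hfin := hmain ε L hε0 hL hεκ (fun p => f (clampD L p)) (fun p => S (clampD L p))
    (fun x => force R₁ R₂ ε (clampI 0 L x.1) x.2)
    (clampD_comp_cont L hL0.le f hsm.continuousOn)
    (clampD_comp_cont L hL0.le S hsS.continuousOn)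
    (by
      unfold force
      refine Continuous.mul (by fun_prop) (Continuous.add ?_ ?_)
      · refine Continuous.div (by fun_prop) (by fun_prop) ?_
        intro x; have := den1 _ (mcl x.1); exact (by linarith : 0 < R₁ - ε * clampI 0 L x.1).ne'
      · refine Continuous.div (by fun_prop) (by fun_prop) ?_
        intro x; have := den2 _ (mcl x.1); exact (by linarith : 0 < R₂ - ε * clampI 0 L x.1).ne')
    (by
      intro x
      have d1 := den1 _ (mcl x.1)
      have d2 := den2 _ (mcl x.1)
      unfold force
      have p1 : 0 < R₁ - ε * clampI 0 L x.1 := by linarith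
      have p2 : 0 < R₂ - ε * clampI 0 L x.1 := by linarith
      have b1 : Real.sin x.2 ^ 2 / (R₁ - ε * clampI 0 L x.1) ≤ 2 / R₁ := by
        calc _ ≤ 1 / (R₁ / 2) := by
              have := Real.sin_sq_le_one x.2
              gcongr
          _ = 2 / R₁ := by field_simp
      have b2 : Real.cos x.2 ^ 2 / (R₂ - ε * clampI 0 L x.1) ≤ 2 / R₂ := by
        calc _ ≤ 1 / (R₂ / 2) := by
              have := Real.cos_sq_le_one x.2
              gcongr
          _ = 2 / R₂ := by field_simp
      rw [abs_mul, abs_neg, abs_of_pos hε0, mul_comm, abs_of_nonneg (by positivity)]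
      gcongr)
    (by
      intro η hη x hx
      have hp : (η, x) ∈ milneDomain L := ⟨hη, hx.1, hx.2⟩
      rw [clampD_eq L _ hp]
      have h1 := hsB _ hp
      have h2 : exp (K * η) * |S (η, x)| ≤ M := by
        refine le_trans ?_ h1
        have := abs_nonneg (dEta S (η, x))
        have := abs_nonneg (dPhi S (η, x))
        have := abs_nonneg (dPsi S (η, x))
        refine mul_le_mul_of_nonneg_left ?_ (exp_pos _).le
        linarith
      rw [Real.exp_neg, ← div_eq_mul_inv, le_div_iff₀ (exp_pos _)]
      linarith)
    (by
      intro η hη φ hφ ψ hψ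
      have hintg := mem_interior_dom L η φ ψ hη hφ hψ
      have hmem := interior_subset hintg
      have hηI : η ∈ Icc 0 L := Ioo_subset_Icc_self hη
      constructor
      · have hev : (fun t => force R₁ R₂ ε (clampI 0 L t) ψ) =ᶠ[nhds η]
            (fun t => force R₁ R₂ ε t ψ) := by
          filter_upwards [Ioo_mem_nhds hη.1 hη.2] with t ht
          rw [clampI_eq 0 L t (Ioo_subset_Icc_self ht)]
        refine DifferentiableAt.congr_of_eventuallyEq ?_ hev
        have d1 := den1 _ hηI
        have d2 := den2 _ hηI
        have p1 : R₁ - ε * η ≠ 0 := (by linarith : 0 < R₁ - ε * η).ne'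
        have p2 : R₂ - ε * η ≠ 0 := (by linarith : 0 < R₂ - ε * η).ne'
        unfold force
        refine DifferentiableAt.mul (by fun_prop) (DifferentiableAt.add ?_ ?_)
        · exact DifferentiableAt.div (by fun_prop) (by fun_prop) p1
        · exact DifferentiableAt.div (by fun_prop) (by fun_prop) p2
      · have hnh : milneDomain L ∈ nhds (η, φ, ψ) := mem_interior_iff_mem_nhds.1 hintg
        have hdf : HasFDerivAt f (fderiv ℝ f (η, φ, ψ)) (η, φ, ψ) :=
          ((hsm.contDiffAt hnh).differentiableAt (by norm_num)).hasFDerivAt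
        have hι : HasFDerivAt (fun x : ℝ × ℝ => (x.1, x.2, ψ))
            ((ContinuousLinearMap.fst ℝ ℝ ℝ).prod
              ((ContinuousLinearMap.snd ℝ ℝ ℝ).prod (0 : ℝ × ℝ →L[ℝ] ℝ))) (η, φ) :=
          hasFDerivAt_fst.prodMk (hasFDerivAt_snd.prodMk (hasFDerivAt_const _ _))
        have hcomp := HasFDerivAt.comp (η, φ) hdf hι
        refine ⟨_, hcomp.congr_of_eventuallyEq ?_, ?_⟩
        · have : ∀ᶠ x : ℝ × ℝ in nhds (η, φ), (x.1, x.2, ψ) ∈ milneDomain L :=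
            hι.continuousAt.eventually_mem hnh
          filter_upwards [this] with x hx
          exact agree _ hx
        · have hE : dEta f (η, φ, ψ) = fderiv ℝ f (η, φ, ψ) (1, 0, 0) := by
            have h1 : HasDerivAt (fun t : ℝ => (t, φ, ψ)) ((1 : ℝ), (0 : ℝ), (0 : ℝ)) η :=
              (hasDerivAt_id η).prodMk ((hasDerivAt_const η φ).prodMk (hasDerivAt_const η ψ))
            exact (HasFDerivAt.comp_hasDerivAt η hdf h1).deriv
          have hP : dPhi f (η, φ, ψ) = fderiv ℝ f (η, φ, ψ) (0, 1, 0) := by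
            have h1 : HasDerivAt (fun t : ℝ => (η, t, ψ)) ((0 : ℝ), (1 : ℝ), (0 : ℝ)) φ :=
              (hasDerivAt_const φ η).prodMk ((hasDerivAt_id φ).prodMk (hasDerivAt_const φ ψ))
            exact (HasFDerivAt.comp_hasDerivAt φ hdf h1).deriv
          have h3 := heqn _ hintg
          simp only at h3
          rw [hE, hP] at h3
          rw [havg η hηI]
          simp only [clampD_eq L _ hmem, clampI_eq 0 L η hηI]
          simp
          linarith)
    (by
      intro x hx hs
      rw [agree _ ⟨⟨le_rfl, hL0.le⟩, hx.1, hx.2⟩]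
      have hq : x ∈ inflowSet := ⟨hs, hx.1, hx.2⟩
      have h1 := hinf x hq
      have h2 := hhB x hq
      have h3 : f (0, x) = h x.1 x.2 := h1
      rw [h3]
      have := abs_nonneg (deriv (fun t => h t x.2) x.1)
      have := abs_nonneg (deriv (fun t => h x.1 t) x.2)
      linarith)
    (by
      intro x hx
      have m1 : ((L, x) : ℝ × ℝ × ℝ) ∈ milneDomain L := ⟨⟨hL0.le, le_rfl⟩, hx.1, hx.2⟩
      have m2 : ((L, -x.1, x.2) : ℝ × ℝ × ℝ) ∈ milneDomain L :=
        ⟨⟨hL0.le, le_rfl⟩, ⟨by have := hx.1.2; simp only; linarith,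
          by have := hx.1.1; simp only; linarith⟩, hx.2⟩
      rw [agree _ m2, agree _ m1]
      exact (hrefl x.1 x.2).symm)
  rw [hlim] at hfin
  refine ⟨hfin.1.trans (by linarith), ?_⟩
  have hl2 : l2Norm L (fun p => f p - limitValue L f)
      = √(∫ η in (0 : ℝ)..L, br (fun x => (f (clampD L (η, x)) - limitValue L f) ^ 2)) := by
    unfold l2Norm
    congr 1
    refine intervalIntegral.integral_congr ?_
    intro η hη
    rw [uIcc_of_le hL0.le] at hη
    refine (br_congr _ (fun x => (f (η, x) - limitValue L f) ^ 2) ?_).symm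
    intro x hx
    rw [agree _ ⟨hη, hx.1, hx.2⟩]
  rw [hl2]
  refine (Real.sqrt_le_sqrt hfin.2).trans ?_
  rw [Real.sqrt_le_left (by positivity)]
  nlinarith

end MilneStmt
end
end

section
/- L∞ bound via the L² bound (Theorem 'Milne LI Theorem'): There exist ε₀ ∈ (0,1) and C > 0, depending only on R₁, R₂, n, K and M, such that for every ε ∈ (0, ε₀] and every classical solution f of the ε-Milne problem with geometric correction whose data h, S satisfy the data bounds, one has ‖f − f_L‖_{L∞} ≤ C (1 + ‖f − f_L‖_{L²}). -/
noncomputable section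

open Real Set MeasureTheory

namespace MilneStmt

/-- The slab `[0,L] × [φ₁, π/2] × [-π, π]`. -/
def slab (L φ₁ : ℝ) : Set (ℝ × ℝ × ℝ) :=
  Icc (0 : ℝ) L ×ˢ Icc φ₁ (π / 2) ×ˢ Icc (-π) π

lemma slab_subset {L φ₁ : ℝ} (h : -(π / 2) ≤ φ₁) : slab L φ₁ ⊆ milneDomain L := by
  rintro ⟨a, b, c⟩ ⟨h1, h2, h3⟩
  exact ⟨h1, ⟨h.trans h2.1, h2.2⟩, h3⟩

/-- The transported problem for `u = f - t` on the closed domain. -/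
structure Core (L κ M t N m : ℝ) (F : ℝ → ℝ → ℝ) (u : ℝ × ℝ × ℝ → ℝ)
    (u' : ℝ × ℝ × ℝ → (ℝ × ℝ × ℝ →L[ℝ] ℝ)) (S : ℝ × ℝ × ℝ → ℝ) : Prop where
  L1 : 1 ≤ L
  N1 : 1 ≤ N
  M0 : 0 ≤ M
  k0 : 0 ≤ κ
  kk : κ ≤ 1 / 100
  der : ∀ p ∈ milneDomain L, HasFDerivWithinAt u (u' p) (milneDomain L) p
  eqn : ∀ p ∈ milneDomain L, Real.sin p.2.1 * u' p (1, 0, 0)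
    + F p.1 p.2.2 * Real.cos p.2.1 * u' p (0, 1, 0) + u p = angAvg u p.1 + S p
  sB : ∀ p ∈ milneDomain L, |S p| ≤ M
  inflow : ∀ p ∈ milneDomain L, p.1 = 0 → 0 < Real.sin p.2.1 → |u p + t| ≤ M
  refl : ∀ φ ψ : ℝ, u (L, φ, ψ) = u (L, -φ, ψ)
  Fn : ∀ p ∈ milneDomain L, F p.1 p.2.2 ≤ 0
  Fk : ∀ p ∈ milneDomain L, -κ ≤ F p.1 p.2.2
  mB : ∀ p ∈ milneDomain L, |u p| ≤ m
  l2 : (∫ η in (0 : ℝ)..L, ∫ ψ in (-π)..π, ∫ φ in (-(π / 2))..(π / 2),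
    u (η, φ, ψ) ^ 2 * Real.cos φ) ≤ N ^ 2

lemma angAvg_neg (u : ℝ × ℝ × ℝ → ℝ) (η : ℝ) :
    angAvg (fun p => - u p) η = - angAvg u η := by
  simp [angAvg, intervalIntegral.integral_neg]

lemma Core.neg {L κ M t N m : ℝ} {F : ℝ → ℝ → ℝ} {u : ℝ × ℝ × ℝ → ℝ}
    {u' : ℝ × ℝ × ℝ → (ℝ × ℝ × ℝ →L[ℝ] ℝ)} {S : ℝ × ℝ × ℝ → ℝ}
    (h : Core L κ M t N m F u u' S) :
    Core L κ M (-t) N m F (fun p => - u p) (fun p => - u' p) (fun p => - S p) where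
  L1 := h.L1
  N1 := h.N1
  M0 := h.M0
  k0 := h.k0
  kk := h.kk
  der p hp := (h.der p hp).neg
  eqn p hp := by
    have := h.eqn p hp
    rw [angAvg_neg]
    simp only [neg_apply]
    linarith
  sB p hp := by simpa using h.sB p hp
  inflow p hp h0 hs := by
    have := h.inflow p hp h0 hs
    rw [← abs_neg]
    convert this using 2
    ring
  refl φ ψ := by simp [h.refl φ ψ]
  Fn := h.Fn
  Fk := h.Fk
  mB p hp := by simpa using h.mB p hp
  l2 := by simpa using h.l2

lemma eventually_comp {a b x v : ℝ} (hx : x ∈ Icc a b) (h1 : v < 0 → a < x)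
    (h2 : 0 < v → x < b) : ∀ᶠ t : ℝ in nhdsWithin 0 (Ioi 0), x + t * v ∈ Icc a b := by
  have hc : Filter.Tendsto (fun t : ℝ => x + t * v) (nhdsWithin 0 (Ioi 0)) (nhds x) := by
    have : Continuous (fun t : ℝ => x + t * v) := by fun_prop
    have h := (this.tendsto 0).mono_left (nhdsWithin_le_nhds (s := Ioi 0))
    simpa using h
  have hpos : ∀ᶠ t : ℝ in nhdsWithin 0 (Ioi 0), 0 < t := self_mem_nhdsWithin
  rcases lt_trichotomy v 0 with hv | hv | hv
  · filter_upwards [hpos, hc.eventually (lt_mem_nhds (h1 hv))] with t ht h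
    exact ⟨h.le, by nlinarith [hx.2]⟩
  · filter_upwards [hpos] with t ht
    simpa [hv] using hx
  · filter_upwards [hpos, hc.eventually (gt_mem_nhds (h2 hv))] with t ht h
    exact ⟨by nlinarith [hx.1], h.le⟩

/-- Comparison principle on a slab. -/
lemma Core.cmp {L κ M t N m : ℝ} {F : ℝ → ℝ → ℝ} {u : ℝ × ℝ × ℝ → ℝ}
    {u' : ℝ × ℝ × ℝ → (ℝ × ℝ × ℝ →L[ℝ] ℝ)} {S : ℝ × ℝ × ℝ → ℝ}
    (h : Core L κ M t N m F u u' S) {φ₁ : ℝ} (hφ : -(π / 2) ≤ φ₁)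
    (g g' : ℝ → ℝ) (b : ℝ) (hg : ∀ x, HasDerivAt g (g' x) x)
    (H : ∀ p ∈ slab L φ₁, u p ≤ g p.1 + b * Real.sin p.2.1 ∨
      ((0 < p.1 ∨ Real.sin p.2.1 ≤ 0) ∧ (p.1 < L ∨ 0 ≤ Real.sin p.2.1) ∧
        angAvg u p.1 + S p ≤ Real.sin p.2.1 * g' p.1
          + F p.1 p.2.2 * Real.cos p.2.1 * (b * Real.cos p.2.1)
          + (g p.1 + b * Real.sin p.2.1))) :
    ∀ p ∈ slab L φ₁, u p ≤ g p.1 + b * Real.sin p.2.1 := by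
  intro q hq
  have hsub := slab_subset (L := L) hφ
  have hcomp : IsCompact (slab L φ₁) := isCompact_Icc.prod (isCompact_Icc.prod isCompact_Icc)
  have hw : ∀ p : ℝ × ℝ × ℝ, HasFDerivAt (fun p : ℝ × ℝ × ℝ => g p.1 + b * Real.sin p.2.1)
      (g' p.1 • ContinuousLinearMap.fst ℝ ℝ (ℝ × ℝ) + b • (Real.cos p.2.1 •
        ((ContinuousLinearMap.fst ℝ ℝ ℝ).comp (ContinuousLinearMap.snd ℝ ℝ (ℝ × ℝ))))) p := by
    intro p
    have h1 : HasFDerivAt (fun p : ℝ × ℝ × ℝ => p.2.1)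
      ((ContinuousLinearMap.fst ℝ ℝ ℝ).comp (ContinuousLinearMap.snd ℝ ℝ (ℝ × ℝ))) p :=
      ((ContinuousLinearMap.fst ℝ ℝ ℝ).comp (ContinuousLinearMap.snd ℝ ℝ (ℝ × ℝ))).hasFDerivAt
    have h2 : HasFDerivAt (fun p : ℝ × ℝ × ℝ => p.1) (ContinuousLinearMap.fst ℝ ℝ (ℝ × ℝ)) p :=
      hasFDerivAt_fst
    exact ((hg p.1).comp_hasFDerivAt p h2).add ((h1.sin).const_mul b)
  have hd : ∀ p ∈ slab L φ₁, HasFDerivWithinAt (fun p => u p - (g p.1 + b * Real.sin p.2.1))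
      (u' p - (g' p.1 • ContinuousLinearMap.fst ℝ ℝ (ℝ × ℝ) + b • (Real.cos p.2.1 •
        ((ContinuousLinearMap.fst ℝ ℝ ℝ).comp (ContinuousLinearMap.snd ℝ ℝ (ℝ × ℝ))))))
      (slab L φ₁) p :=
    fun p hp => ((h.der p (hsub hp)).mono hsub).sub (hw p).hasFDerivWithinAt
  obtain ⟨p, hp, hmax⟩ := hcomp.exists_isMaxOn ⟨q, hq⟩
    (fun p hp => (hd p hp).continuousWithinAt)
  have hqp : u q - (g q.1 + b * Real.sin q.2.1) ≤ u p - (g p.1 + b * Real.sin p.2.1) := hmax hq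
  suffices u p ≤ g p.1 + b * Real.sin p.2.1 by linarith
  rcases H p hp with h1 | ⟨h1, h2, h3⟩
  · exact h1
  have hF := h.Fn p (hsub hp)
  have hF' : 0 ≤ -F p.1 p.2.2 := by linarith
  have hcos : 0 ≤ Real.cos p.2.1 := Real.cos_nonneg_of_mem_Icc (hsub hp).2.1
  have hv : ((-Real.sin p.2.1, -F p.1 p.2.2 * Real.cos p.2.1, 0) : ℝ × ℝ × ℝ)
      ∈ posTangentConeAt (slab L φ₁) p := by
    apply mem_posTangentConeAt_of_frequently_mem
    apply Filter.Eventually.frequently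
    have e1 := eventually_comp (v := -Real.sin p.2.1) hp.1
      (by intro hh; rcases h1 with h1 | h1
          · exact h1
          · linarith)
      (by intro hh; rcases h2 with h1 | h1
          · exact h1
          · linarith)
    have e2 := eventually_comp (v := -F p.1 p.2.2 * Real.cos p.2.1) hp.2.1
      (by intro hh; exact absurd hh (not_lt.mpr (mul_nonneg hF' hcos)))
      (by intro hh
          refine lt_of_le_of_ne hp.2.1.2 ?_
          intro h0
          rw [h0] at hh
          simp at hh)
    filter_upwards [e1, e2] with s h1 h2
    refine ⟨?_, ?_, ?_⟩
    · simpa using h1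
    · simpa using h2
    · simpa using hp.2.2
  have key := hmax.localize.hasFDerivWithinAt_nonpos (hd p hp) hv
  have hE := h.eqn p (hsub hp)
  have hlin : u' p (-Real.sin p.2.1, -F p.1 p.2.2 * Real.cos p.2.1, 0)
      = -(Real.sin p.2.1 * u' p (1, 0, 0)
        + F p.1 p.2.2 * Real.cos p.2.1 * u' p (0, 1, 0)) := by
    have : ((-Real.sin p.2.1, -F p.1 p.2.2 * Real.cos p.2.1, 0) : ℝ × ℝ × ℝ)
      = (-Real.sin p.2.1) • ((1, 0, 0) : ℝ × ℝ × ℝ)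
        + (-F p.1 p.2.2 * Real.cos p.2.1) • ((0, 1, 0) : ℝ × ℝ × ℝ) := by
      simp
    rw [this, map_add, map_smul, map_smul]
    simp only [smul_eq_mul]
    ring
  simp only [sub_apply, add_apply,
    smul_apply, hlin, ContinuousLinearMap.comp_apply,
    ContinuousLinearMap.coe_fst', ContinuousLinearMap.coe_snd', smul_eq_mul] at key
  nlinarith [key, hE, h3]

/-- Projection of the whole space onto the domain. -/
def clip (L : ℝ) (p : ℝ × ℝ × ℝ) : ℝ × ℝ × ℝ :=
  (max 0 (min L p.1), max (-(π / 2)) (min (π / 2) p.2.1), max (-π) (min π p.2.2))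

lemma clip_cont (L : ℝ) : Continuous (clip L) := by
  unfold clip; fun_prop

lemma clip_mem {L : ℝ} (hL : 0 ≤ L) (p : ℝ × ℝ × ℝ) : clip L p ∈ milneDomain L := by
  have := Real.pi_pos
  refine ⟨⟨le_max_left _ _, max_le hL (min_le_left _ _)⟩,
    ⟨le_max_left _ _, max_le (by linarith) (min_le_left _ _)⟩,
    ⟨le_max_left _ _, max_le (by linarith) (min_le_left _ _)⟩⟩

lemma clip_eq {L : ℝ} {p : ℝ × ℝ × ℝ} (hp : p ∈ milneDomain L) : clip L p = p := by
  obtain ⟨h1, h2, h3⟩ := hp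
  simp only [clip]
  rw [min_eq_right h1.2, min_eq_right h2.2, min_eq_right h3.2, max_eq_right h1.1,
    max_eq_right h2.1, max_eq_right h3.1]

lemma clip_comp_cont {L : ℝ} (hL : 0 ≤ L) {u : ℝ × ℝ × ℝ → ℝ}
    (hu : ContinuousOn u (milneDomain L)) : Continuous (fun p => u (clip L p)) :=
  hu.comp_continuous (clip_cont L) (clip_mem hL)

lemma inner_cont {g : ℝ × ℝ × ℝ → ℝ} (hg : Continuous g) (a b : ℝ) :
    Continuous (fun q : ℝ × ℝ => ∫ φ in a..b, g (q.1, φ, q.2) * Real.cos φ) := by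
  apply intervalIntegral.continuous_parametric_intervalIntegral_of_continuous'
  fun_prop

lemma outer_cont {g : ℝ × ℝ × ℝ → ℝ} (hg : Continuous g) :
    Continuous (fun η : ℝ => ∫ ψ in (-π)..π, ∫ φ in (-(π / 2))..(π / 2),
      g (η, φ, ψ) * Real.cos φ) := by
  apply intervalIntegral.continuous_parametric_intervalIntegral_of_continuous'
  exact inner_cont hg _ _

lemma angAvg_cont {g : ℝ × ℝ × ℝ → ℝ} (hg : Continuous g) : Continuous (angAvg g) :=
  continuous_const.mul (outer_cont hg)

lemma pi_neg_le : -π ≤ π := by linarith [Real.pi_pos]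

lemma half_neg_le : -(π / 2) ≤ π / 2 := by linarith [Real.pi_pos]

lemma inner_congr {L η ψ : ℝ} {g k : ℝ × ℝ × ℝ → ℝ} (hη : η ∈ Icc 0 L) (hψ : ψ ∈ Icc (-π) π)
    (h : ∀ p ∈ milneDomain L, g p = k p) :
    (∫ φ in (-(π / 2))..(π / 2), g (η, φ, ψ) * Real.cos φ)
      = ∫ φ in (-(π / 2))..(π / 2), k (η, φ, ψ) * Real.cos φ := by
  apply intervalIntegral.integral_congr
  intro φ hφ
  rw [uIcc_of_le half_neg_le] at hφ
  simp only
  rw [h (η, φ, ψ) ⟨hη, hφ, hψ⟩]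

lemma outer_congr {L η : ℝ} {g k : ℝ × ℝ × ℝ → ℝ} (hη : η ∈ Icc 0 L)
    (h : ∀ p ∈ milneDomain L, g p = k p) :
    (∫ ψ in (-π)..π, ∫ φ in (-(π / 2))..(π / 2), g (η, φ, ψ) * Real.cos φ)
      = ∫ ψ in (-π)..π, ∫ φ in (-(π / 2))..(π / 2), k (η, φ, ψ) * Real.cos φ := by
  apply intervalIntegral.integral_congr
  intro ψ hψ
  rw [uIcc_of_le pi_neg_le] at hψ
  exact inner_congr hη hψ h

lemma angAvg_congr {L η : ℝ} {g k : ℝ × ℝ × ℝ → ℝ} (hη : η ∈ Icc 0 L)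
    (h : ∀ p ∈ milneDomain L, g p = k p) : angAvg g η = angAvg k η := by
  unfold angAvg; rw [outer_congr hη h]

/-- It is enough to control the inner integral. -/
lemma angAvg_le {g : ℝ × ℝ × ℝ → ℝ} (hg : Continuous g) {η A : ℝ}
    (h : ∀ ψ ∈ Icc (-π) π, (∫ φ in (-(π / 2))..(π / 2), g (η, φ, ψ) * Real.cos φ) ≤ 2 * A) :
    angAvg g η ≤ A := by
  have hc : Continuous (fun ψ => ∫ φ in (-(π / 2))..(π / 2), g (η, φ, ψ) * Real.cos φ) :=
    (inner_cont hg _ _).comp (Continuous.prodMk continuous_const continuous_id)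
  have := intervalIntegral.integral_mono_on pi_neg_le (hc.intervalIntegrable _ _)
    (continuous_const.intervalIntegrable (μ := volume) _ _) h
  have hp := Real.pi_pos
  rw [intervalIntegral.integral_const, smul_eq_mul] at this
  unfold angAvg
  rw [one_div, inv_mul_le_iff₀ (by positivity)]
  linarith

lemma le_angAvg {g : ℝ × ℝ × ℝ → ℝ} (hg : Continuous g) {η A : ℝ}
    (h : ∀ ψ ∈ Icc (-π) π, 2 * A ≤ (∫ φ in (-(π / 2))..(π / 2), g (η, φ, ψ) * Real.cos φ)) :
    A ≤ angAvg g η := by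
  have := angAvg_le hg.neg (η := η) (A := -A) (fun ψ hψ => by
    have := h ψ hψ
    simp only [Pi.neg_apply, neg_mul, intervalIntegral.integral_neg]
    linarith)
  have h2 := angAvg_neg g η
  have : angAvg (fun p => - g p) η ≤ -A := this
  linarith

lemma angAvg_affine {g : ℝ × ℝ × ℝ → ℝ} (hg : Continuous g) (α β η : ℝ) :
    angAvg (fun p => α + β * g p) η = α + β * angAvg g η := by
  have h1 : ∀ ψ : ℝ, (∫ φ in (-(π / 2))..(π / 2), (α + β * g (η, φ, ψ)) * Real.cos φ)
      = 2 * α + β * ∫ φ in (-(π / 2))..(π / 2), g (η, φ, ψ) * Real.cos φ := by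
    intro ψ
    have : ∀ φ, (α + β * g (η, φ, ψ)) * Real.cos φ
      = α * Real.cos φ + β * (g (η, φ, ψ) * Real.cos φ) := fun φ => by ring
    simp_rw [this]
    rw [intervalIntegral.integral_add, intervalIntegral.integral_const_mul,
      intervalIntegral.integral_const_mul, integral_cos]
    · simp; ring
    · exact (by fun_prop : Continuous _).intervalIntegrable _ _
    · exact (by fun_prop : Continuous _).intervalIntegrable _ _
  have hc : Continuous (fun ψ => ∫ φ in (-(π / 2))..(π / 2), g (η, φ, ψ) * Real.cos φ) :=
    (inner_cont hg _ _).comp (Continuous.prodMk continuous_const continuous_id)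
  unfold angAvg
  simp_rw [h1]
  have e : ∀ J : ℝ → ℝ, Continuous J →
      (∫ ψ in (-π)..π, 2 * α + β * J ψ) = 4 * π * α + β * ∫ ψ in (-π)..π, J ψ := by
    intro J hJ
    rw [intervalIntegral.integral_add (continuous_const.intervalIntegrable _ _)
      ((hJ.intervalIntegrable _ _).const_mul β), intervalIntegral.integral_const_mul β J,
      intervalIntegral.integral_const, smul_eq_mul]
    ring
  rw [e _ hc]
  have hp := Real.pi_ne_zero
  field_simp

lemma angAvg_mono {g k : ℝ × ℝ × ℝ → ℝ} (hg : Continuous g) (hk : Continuous k) {η : ℝ}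
    (h : ∀ p, g p ≤ k p) : angAvg g η ≤ angAvg k η := by
  have hp := Real.pi_pos
  unfold angAvg
  refine mul_le_mul_of_nonneg_left ?_ (by positivity)
  refine intervalIntegral.integral_mono_on pi_neg_le ?_ ?_ ?_
  · exact ((inner_cont hg _ _).comp
      (Continuous.prodMk continuous_const continuous_id)).intervalIntegrable _ _
  · exact ((inner_cont hk _ _).comp
      (Continuous.prodMk continuous_const continuous_id)).intervalIntegrable _ _
  intro ψ _
  refine intervalIntegral.integral_mono_on half_neg_le ?_ ?_ ?_
  · exact (by fun_prop : Continuous _).intervalIntegrable _ _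
  · exact (by fun_prop : Continuous _).intervalIntegrable _ _
  intro φ hφ
  exact mul_le_mul_of_nonneg_right (h _) (Real.cos_nonneg_of_mem_Icc hφ)

lemma trig_integral (A B a b : ℝ) :
    (∫ φ in a..b, (A + B * Real.sin φ) * Real.cos φ)
      = (A * Real.sin b + B * Real.sin b ^ 2 / 2) - (A * Real.sin a + B * Real.sin a ^ 2 / 2) := by
  apply intervalIntegral.integral_eq_sub_of_hasDerivAt
    (f := fun φ => A * Real.sin φ + B * Real.sin φ ^ 2 / 2)
  · intro x _
    have h := ((Real.hasDerivAt_sin x).const_mul A).add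
      ((((Real.hasDerivAt_sin x).pow 2).const_mul B).div_const 2)
    refine HasDerivAt.congr_deriv h ?_
    simp; ring
  · exact (by fun_prop : Continuous _).intervalIntegrable _ _

lemma angAvg_le_tent {g : ℝ × ℝ × ℝ → ℝ} (hg : Continuous g) {η A B : ℝ}
    (h1 : ∀ φ ∈ Icc 0 (π / 2), ∀ ψ ∈ Icc (-π) π, g (η, φ, ψ) ≤ A + B * (1 - Real.sin φ))
    (h2 : ∀ φ ∈ Icc (-(π / 2)) 0, ∀ ψ ∈ Icc (-π) π, g (η, φ, ψ) ≤ A + B * (1 + Real.sin φ)) :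
    angAvg g η ≤ A + B / 2 := by
  have hp := Real.pi_pos
  apply angAvg_le hg
  intro ψ hψ
  have hc : Continuous (fun φ => g (η, φ, ψ) * Real.cos φ) := by fun_prop
  rw [← intervalIntegral.integral_add_adjacent_intervals (b := 0)
    (hc.intervalIntegrable _ _) (hc.intervalIntegrable _ _)]
  have e1 : (∫ φ in (0 : ℝ)..(π / 2), g (η, φ, ψ) * Real.cos φ)
      ≤ ∫ φ in (0 : ℝ)..(π / 2), ((A + B) + (-B) * Real.sin φ) * Real.cos φ := by
    refine intervalIntegral.integral_mono_on (by linarith) (hc.intervalIntegrable _ _)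
      ((by fun_prop : Continuous _).intervalIntegrable _ _) ?_
    intro φ hφ
    refine mul_le_mul_of_nonneg_right ?_
      (Real.cos_nonneg_of_mem_Icc ⟨by linarith [hφ.1], hφ.2⟩)
    linarith [h1 φ hφ ψ hψ]
  have e2 : (∫ φ in (-(π / 2))..(0 : ℝ), g (η, φ, ψ) * Real.cos φ)
      ≤ ∫ φ in (-(π / 2))..(0 : ℝ), ((A + B) + B * Real.sin φ) * Real.cos φ := by
    refine intervalIntegral.integral_mono_on (by linarith) (hc.intervalIntegrable _ _)
      ((by fun_prop : Continuous _).intervalIntegrable _ _) ?_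
    intro φ hφ
    refine mul_le_mul_of_nonneg_right ?_
      (Real.cos_nonneg_of_mem_Icc ⟨hφ.1, by linarith [hφ.2]⟩)
    linarith [h2 φ hφ ψ hψ]
  rw [trig_integral] at e1 e2
  simp at e1 e2
  linarith

lemma angAvg_lower {g : ℝ × ℝ × ℝ → ℝ} (hg : Continuous g) {η c : ℝ} (h0 : ∀ p, 0 ≤ g p)
    (h1 : ∀ φ ∈ Icc (π / 6) (π / 2), ∀ ψ ∈ Icc (-π) π, c ≤ g (η, φ, ψ)) :
    c / 4 ≤ angAvg g η := by
  have hp := Real.pi_pos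
  apply le_angAvg hg
  intro ψ hψ
  have hc : Continuous (fun φ => g (η, φ, ψ) * Real.cos φ) := by fun_prop
  rw [← intervalIntegral.integral_add_adjacent_intervals (b := π / 6)
    (hc.intervalIntegrable _ _) (hc.intervalIntegrable _ _)]
  have e1 : (∫ φ in (π / 6)..(π / 2), (c + 0 * Real.sin φ) * Real.cos φ)
      ≤ ∫ φ in (π / 6)..(π / 2), g (η, φ, ψ) * Real.cos φ := by
    refine intervalIntegral.integral_mono_on (by linarith)
      ((by fun_prop : Continuous _).intervalIntegrable _ _) (hc.intervalIntegrable _ _) ?_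
    intro φ hφ
    refine mul_le_mul_of_nonneg_right ?_
      (Real.cos_nonneg_of_mem_Icc ⟨by linarith [hφ.1], hφ.2⟩)
    linarith [h1 φ hφ ψ hψ]
  have e2 : 0 ≤ (∫ φ in (-(π / 2))..(π / 6), g (η, φ, ψ) * Real.cos φ) := by
    refine intervalIntegral.integral_nonneg (by linarith) ?_
    intro φ hφ
    exact mul_nonneg (h0 _) (Real.cos_nonneg_of_mem_Icc ⟨hφ.1, by linarith [hφ.2]⟩)
  rw [trig_integral] at e1
  simp at e1
  linarith

lemma Core.cont {L κ M t N m : ℝ} {F : ℝ → ℝ → ℝ} {u : ℝ × ℝ × ℝ → ℝ}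
    {u' : ℝ × ℝ × ℝ → (ℝ × ℝ × ℝ →L[ℝ] ℝ)} {S : ℝ × ℝ × ℝ → ℝ}
    (h : Core L κ M t N m F u u' S) : ContinuousOn u (milneDomain L) :=
  fun p hp => (h.der p hp).continuousWithinAt

lemma Core.avgBound {L κ M t N m : ℝ} {F : ℝ → ℝ → ℝ} {u : ℝ × ℝ × ℝ → ℝ}
    {u' : ℝ × ℝ × ℝ → (ℝ × ℝ × ℝ →L[ℝ] ℝ)} {S : ℝ × ℝ × ℝ → ℝ}
    (h : Core L κ M t N m F u u' S) :
    ∃ G G' : ℝ → ℝ, (∀ x, HasDerivAt G (G' x) x) ∧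
      (∀ x ∈ Icc 0 L, 0 ≤ G x ∧ 24 * G x ≤ N ∧ 0 ≤ G' x ∧ angAvg u x ≤ N / 2 + G' x) ∧
      (∀ c : ℝ, 0 ≤ c → (∀ p ∈ slab L (π / 6), p.1 ≤ 1 / 8 → u p ≤ -c) → c ≤ 2 * N) := by
  have hp := Real.pi_pos
  have hN := h.N1
  have hN0 : 0 < N := by linarith
  have hL := h.L1
  have hL0 : 0 ≤ L := by linarith
  have hv := clip_comp_cont hL0 h.cont
  set v : ℝ × ℝ × ℝ → ℝ := fun p => u (clip L p) with hvdef
  have hvu : ∀ p ∈ milneDomain L, v p = u p := fun p hp => by simp only [hvdef, clip_eq hp]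
  have hv2 : Continuous (fun p => v p ^ 2) := hv.pow 2
  have ha := angAvg_cont hv2
  set a : ℝ → ℝ := angAvg (fun p => v p ^ 2) with hadef
  have ha0 : ∀ x, 0 ≤ a x := by
    intro x
    have := angAvg_lower (η := x) (c := 0) hv2 (fun p => sq_nonneg _)
      (fun _ _ _ _ => sq_nonneg _)
    simpa using this
  have htot : (∫ x in (0 : ℝ)..L, a x) ≤ N ^ 2 / 12 := by
    have e : (∫ x in (0 : ℝ)..L, a x) = (1 / (4 * π)) * ∫ η in (0 : ℝ)..L, ∫ ψ in (-π)..π,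
        ∫ φ in (-(π / 2))..(π / 2), u (η, φ, ψ) ^ 2 * Real.cos φ := by
      rw [← intervalIntegral.integral_const_mul]
      apply intervalIntegral.integral_congr
      intro x hx
      rw [uIcc_of_le hL0] at hx
      simp only [hadef, angAvg]
      congr 1
      exact outer_congr (g := fun p => v p ^ 2) (k := fun p => u p ^ 2) hx
        (fun p hp => by simp only [hvu p hp])
    rw [e]
    have h3 := Real.pi_gt_three
    calc (1 / (4 * π)) * _ ≤ (1 / (4 * π)) * N ^ 2 :=
          mul_le_mul_of_nonneg_left h.l2 (by positivity)
      _ ≤ (1 / 12) * N ^ 2 := by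
          refine mul_le_mul_of_nonneg_right ?_ (by positivity)
          apply one_div_le_one_div_of_le <;> linarith
      _ = _ := by ring
  have hI : ∀ x, HasDerivAt (fun y => ∫ s in (0 : ℝ)..y, a s) (a x) x := fun x =>
    intervalIntegral.integral_hasDerivAt_right (ha.intervalIntegrable _ _)
      (ha.stronglyMeasurableAtFilter _ _) ha.continuousAt
  have hIle : ∀ x ∈ Icc 0 L, (∫ s in (0 : ℝ)..x, a s) ≤ N ^ 2 / 12 := by
    intro x hx
    refine le_trans ?_ htot
    exact intervalIntegral.integral_mono_interval le_rfl hx.1 hx.2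
      (Filter.Eventually.of_forall ha0) (ha.intervalIntegrable _ _)
  refine ⟨fun y => (∫ s in (0 : ℝ)..y, a s) / (2 * N), fun x => a x / (2 * N),
    fun x => (hI x).div_const _, ?_, ?_⟩
  · intro x hx
    refine ⟨?_, ?_, ?_, ?_⟩
    · exact div_nonneg (intervalIntegral.integral_nonneg hx.1 (fun s _ => ha0 s)) (by positivity)
    · have := hIle x hx
      have e : 24 * ((∫ s in (0 : ℝ)..x, a s) / (2 * N)) = 12 * (∫ s in (0 : ℝ)..x, a s) / N := by
        field_simp; ring
      simp only [e]
      rw [div_le_iff₀ hN0]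
      nlinarith
    · exact div_nonneg (ha0 x) (by positivity)
    · rw [angAvg_congr hx (fun p hp => (hvu p hp).symm)]
      have e1 := angAvg_mono (η := x) hv (k := fun p => N / 2 + (1 / (2 * N)) * v p ^ 2)
        (by fun_prop) (by
          intro p
          have : N / 2 + (1 / (2 * N)) * v p ^ 2 - v p = (v p - N) ^ 2 / (2 * N) := by
            field_simp; ring
          have h2 : 0 ≤ (v p - N) ^ 2 / (2 * N) := by positivity
          linarith)
      rw [angAvg_affine hv2] at e1
      have e2 : (1 / (2 * N)) * a x = a x / (2 * N) := by ring
      linarith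
  · intro c hc H
    have hlow : ∀ x ∈ Icc (0 : ℝ) (1 / 8), c ^ 2 / 4 ≤ a x := by
      intro x hx
      refine angAvg_lower hv2 (fun p => sq_nonneg _) ?_
      intro φ hφ ψ hψ
      have hm : (x, φ, ψ) ∈ slab L (π / 6) := ⟨⟨hx.1, by linarith [hx.2]⟩, hφ, hψ⟩
      have := H _ hm hx.2
      rw [hvu _ (slab_subset (by linarith) hm)]
      nlinarith
    have e1 := intervalIntegral.integral_mono_on (by norm_num : (0 : ℝ) ≤ 1 / 8)
      (continuous_const.intervalIntegrable (μ := volume) _ _) (ha.intervalIntegrable _ _) hlow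
    have e2 := hIle (1 / 8) ⟨by norm_num, by linarith⟩
    rw [intervalIntegral.integral_const, smul_eq_mul] at e1
    nlinarith

lemma Core.t_le {L κ M t N m : ℝ} {F : ℝ → ℝ → ℝ} {u : ℝ × ℝ × ℝ → ℝ}
    {u' : ℝ × ℝ × ℝ → (ℝ × ℝ × ℝ →L[ℝ] ℝ)} {S : ℝ × ℝ × ℝ → ℝ}
    (h : Core L κ M t N m F u u' S) : t ≤ 4 * (2 * M + 1) * N := by
  have hp := Real.pi_pos
  have hN := h.N1
  have hM := h.M0
  have hL := h.L1
  obtain ⟨G, G', hG, hB, hlow⟩ := h.avgBound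
  by_contra hcon
  push Not at hcon
  have hMN : 0 ≤ M * N := mul_nonneg hM (by linarith)
  have ht : 0 < t := by nlinarith
  have key := h.cmp (φ₁ := π / 6) (by linarith)
    (fun x => (M - t) + 2 * (t + N + M) * x + 2 * G x)
    (fun x => 2 * (t + N + M) + 2 * G' x) 0
    (fun x => by
      have := (((hasDerivAt_id x).const_mul (2 * (t + N + M))).const_add (M - t)).add
        ((hG x).const_mul 2)
      refine HasDerivAt.congr_deriv this ?_
      ring)
    (by
      intro p hp'
      have hpD := slab_subset (by linarith : -(π / 2) ≤ π / 6) hp'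
      obtain ⟨g1, g2, g3, g4⟩ := hB p.1 hp'.1
      have hs : 1 / 2 ≤ Real.sin p.2.1 := by
        rw [← Real.sin_pi_div_six]
        exact Real.sin_le_sin_of_le_of_le_pi_div_two (by linarith) hp'.2.1.2 hp'.2.1.1
      have hS := (abs_le.1 (h.sB p hpD)).2
      rcases hp'.1.1.eq_or_lt with h0 | h0
      · left
        have := (abs_le.1 (h.inflow p hpD h0.symm (by linarith))).2
        simp only [← h0]
        rw [← h0] at g1
        linarith
      · right
        refine ⟨Or.inl h0, Or.inr (by linarith), ?_⟩
        have e1 : 1 / 2 * (2 * (t + N + M) + 2 * G' p.1)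
            ≤ Real.sin p.2.1 * (2 * (t + N + M) + 2 * G' p.1) :=
          mul_le_mul_of_nonneg_right hs (by linarith)
        have e2 : 0 ≤ (t + N + M) * p.1 := mul_nonneg (by linarith) h0.le
        simp only [zero_mul, mul_zero, add_zero]
        nlinarith)
  have := hlow (t / 2) (by linarith) (by
    intro p hp' h8
    have e := key p hp'
    obtain ⟨g1, g2, g3, g4⟩ := hB p.1 hp'.1
    simp only [zero_mul, add_zero] at e
    have e2 : (t + N + M) * p.1 ≤ (t + N + M) * (1 / 8) :=
      mul_le_mul_of_nonneg_left h8 (by linarith)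
    nlinarith)
  nlinarith

lemma Core.upper {L κ M t N m : ℝ} {F : ℝ → ℝ → ℝ} {u : ℝ × ℝ × ℝ → ℝ}
    {u' : ℝ × ℝ × ℝ → (ℝ × ℝ × ℝ →L[ℝ] ℝ)} {S : ℝ × ℝ × ℝ → ℝ}
    (h : Core L κ M t N m F u u' S) :
    ∀ p ∈ milneDomain L, u p ≤ 3 * M + |t| + 2 * N + 2 * κ * m + 3 / 4 * m := by
  have hp := Real.pi_pos
  have hN := h.N1
  have hM := h.M0
  have hL := h.L1
  have hκ := h.k0
  have hmem0 : ((0, 0, 0) : ℝ × ℝ × ℝ) ∈ milneDomain L :=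
    ⟨⟨le_rfl, by linarith⟩, ⟨by linarith, by linarith⟩, ⟨by linarith, by linarith⟩⟩
  have hm : 0 ≤ m := (abs_nonneg _).trans (h.mB _ hmem0)
  have hkm : 0 ≤ κ * m := mul_nonneg hκ hm
  have htn : -t ≤ |t| := neg_le_abs t
  have ht0 : 0 ≤ |t| := abs_nonneg t
  have hLm : L ∈ Icc 0 L := ⟨by linarith, le_rfl⟩
  obtain ⟨G, G', hG, hB, -⟩ := h.avgBound
  -- outgoing directions
  have w1 := h.cmp (φ₁ := -(π / 2)) le_rfl
    (fun x => (2 * M + |t| + N + 3 / 2 * m) + 3 * G x) (fun x => 3 * G' x) (-(3 / 2 * m))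
    (fun x => ((hG x).const_mul 3).const_add _)
    (by
      intro p hpD
      obtain ⟨g1, g2, g3, g4⟩ := hB p.1 hpD.1
      have hS := (abs_le.1 (h.sB p hpD)).2
      have hmB := (abs_le.1 (h.mB p hpD)).2
      have hs1 := Real.sin_le_one p.2.1
      have hX : 0 ≤ m * (1 - Real.sin p.2.1) := mul_nonneg hm (by linarith)
      rcases lt_or_ge (Real.sin p.2.1) (1 / 3) with hs | hs
      · left
        have : m * (1 - 1 / 3) ≤ m * (1 - Real.sin p.2.1) :=
          mul_le_mul_of_nonneg_left (by linarith) hm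
        nlinarith
      rcases hpD.1.1.eq_or_lt with h0 | h0
      · left
        have := (abs_le.1 (h.inflow p hpD h0.symm (by linarith))).2
        nlinarith
      · right
        refine ⟨Or.inl h0, Or.inr (by linarith), ?_⟩
        have e1 : 1 / 3 * (3 * G' p.1) ≤ Real.sin p.2.1 * (3 * G' p.1) :=
          mul_le_mul_of_nonneg_right hs (by linarith)
        have e2 : 0 ≤ F p.1 p.2.2 * Real.cos p.2.1 * (-(3 / 2 * m) * Real.cos p.2.1) := by
          have : 0 ≤ (-F p.1 p.2.2) * (m * Real.cos p.2.1 ^ 2) :=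
            mul_nonneg (by linarith [h.Fn p hpD]) (mul_nonneg hm (sq_nonneg _))
          nlinarith
        nlinarith)
  -- incoming directions
  have w2 := h.cmp (φ₁ := -(π / 2)) le_rfl
    (fun x => (2 * M + |t| + 2 * N + 2 * κ * m + 3 / 2 * m) + (-3) * G x)
    (fun x => (-3) * G' x) (3 / 2 * m)
    (fun x => ((hG x).const_mul (-3)).const_add _)
    (by
      intro p hpD
      obtain ⟨g1, g2, g3, g4⟩ := hB p.1 hpD.1
      have hS := (abs_le.1 (h.sB p hpD)).2
      have hmB := (abs_le.1 (h.mB p hpD)).2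
      have hs1 := Real.neg_one_le_sin p.2.1
      have hX : 0 ≤ m * (1 + Real.sin p.2.1) := mul_nonneg hm (by linarith)
      rcases lt_or_ge (-(1 / 3)) (Real.sin p.2.1) with hs | hs
      · left
        have : m * (1 - 1 / 3) ≤ m * (1 + Real.sin p.2.1) :=
          mul_le_mul_of_nonneg_left (by linarith) hm
        nlinarith
      rcases hpD.1.2.eq_or_lt with h0 | h0
      · left
        obtain ⟨x, φ, ψ⟩ := p
        simp only at h0 hs hs1 hX g1 g2 g3 g4
        subst h0
        have hr : (x, -φ, ψ) ∈ slab x (-(π / 2)) :=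
          ⟨hpD.1, ⟨by linarith [hpD.2.1.2], by linarith [hpD.2.1.1]⟩, hpD.2.2⟩
        have := w1 _ hr
        rw [h.refl φ ψ]
        simp only [Real.sin_neg] at this ⊢
        nlinarith
      · right
        refine ⟨Or.inr (by linarith), Or.inl h0, ?_⟩
        have e1 : 1 / 3 * (3 * G' p.1) ≤ (-Real.sin p.2.1) * (3 * G' p.1) :=
          mul_le_mul_of_nonneg_right (by linarith) (by linarith)
        have e2 : -(3 / 2 * (κ * m)) ≤
            F p.1 p.2.2 * Real.cos p.2.1 * (3 / 2 * m * Real.cos p.2.1) := by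
          have hc : Real.cos p.2.1 ^ 2 ≤ 1 := Real.cos_sq_le_one _
          have a1 : (-F p.1 p.2.2) * (m * Real.cos p.2.1 ^ 2) ≤ κ * (m * 1) := by
            apply mul_le_mul (by linarith [h.Fk p hpD])
              (mul_le_mul_of_nonneg_left hc hm) (mul_nonneg hm (sq_nonneg _)) hκ
          nlinarith
        nlinarith)
  -- the average
  have havg : ∀ x ∈ Icc 0 L, angAvg u x ≤ 2 * M + |t| + 2 * N + 2 * κ * m + 3 / 4 * m := by
    intro x hx
    have hv := clip_comp_cont (by linarith) h.cont
    obtain ⟨g1, g2, g3, g4⟩ := hB x hx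
    rw [angAvg_congr hx (k := fun p => u (clip L p)) (fun p hp => by simp only [clip_eq hp])]
    have := angAvg_le_tent hv (η := x) (A := 2 * M + |t| + 2 * N + 2 * κ * m) (B := 3 / 2 * m)
      (by
        intro φ hφ ψ hψ
        have hq : (x, φ, ψ) ∈ milneDomain L := ⟨hx, ⟨by linarith [hφ.1], hφ.2⟩, hψ⟩
        simp only [clip_eq hq]
        have := w1 _ hq
        simp only at this
        nlinarith)
      (by
        intro φ hφ ψ hψ
        have hq : (x, φ, ψ) ∈ milneDomain L := ⟨hx, ⟨hφ.1, by linarith [hφ.2]⟩, hψ⟩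
        simp only [clip_eq hq]
        have := w2 _ hq
        simp only at this
        nlinarith)
    linarith
  have w3 := h.cmp (φ₁ := 0) (by linarith)
    (fun _ => 3 * M + |t| + 2 * N + 2 * κ * m + 3 / 4 * m) (fun _ => 0) 0
    (fun x => hasDerivAt_const _ _)
    (by
      intro p hp'
      have hpD := slab_subset (by linarith : -(π / 2) ≤ 0) hp'
      have hS := (abs_le.1 (h.sB p hpD)).2
      have ha := havg p.1 hpD.1
      have hs : 0 ≤ Real.sin p.2.1 :=
        Real.sin_nonneg_of_nonneg_of_le_pi hp'.2.1.1 (by linarith [hp'.2.1.2])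
      by_cases hc : 0 < p.1 ∨ Real.sin p.2.1 ≤ 0
      · right
        refine ⟨hc, Or.inr hs, ?_⟩
        simp only [zero_mul, mul_zero, add_zero, zero_add]
        linarith
      · left
        push Not at hc
        have h0 : p.1 = 0 := le_antisymm hc.1 hpD.1.1
        have := (abs_le.1 (h.inflow p hpD h0 hc.2)).2
        simp only [zero_mul, add_zero]
        linarith)
  have w4 := h.cmp (φ₁ := -(π / 2)) le_rfl
    (fun _ => 3 * M + |t| + 2 * N + 2 * κ * m + 3 / 4 * m) (fun _ => 0) 0
    (fun x => hasDerivAt_const _ _)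
    (by
      intro p hpD
      have hS := (abs_le.1 (h.sB p hpD)).2
      have ha := havg p.1 hpD.1
      rcases le_or_gt 0 p.2.1 with hs | hs
      · left
        exact w3 p ⟨hpD.1, ⟨hs, hpD.2.1.2⟩, hpD.2.2⟩
      have hs' : Real.sin p.2.1 ≤ 0 :=
        Real.sin_nonpos_of_nonpos_of_neg_pi_le hs.le (by linarith [hpD.2.1.1])
      rcases hpD.1.2.eq_or_lt with h0 | h0
      · left
        obtain ⟨x, φ, ψ⟩ := p
        simp only at h0 hs hs'
        subst h0
        have hr : (x, -φ, ψ) ∈ slab x 0 :=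
          ⟨hpD.1, ⟨by linarith, by linarith [hpD.2.1.1]⟩, hpD.2.2⟩
        have := w3 _ hr
        rw [h.refl φ ψ]
        simpa using this
      · right
        refine ⟨Or.inr hs', Or.inl h0, ?_⟩
        simp only [zero_mul, mul_zero, add_zero, zero_add]
        linarith)
  intro p hp'
  have := w4 p hp'
  simpa using this

lemma Core.final {L κ M t N m : ℝ} {F : ℝ → ℝ → ℝ} {u : ℝ × ℝ × ℝ → ℝ}
    {u' : ℝ × ℝ × ℝ → (ℝ × ℝ × ℝ →L[ℝ] ℝ)} {S : ℝ × ℝ × ℝ → ℝ}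
    (h : Core L κ M t N m F u u' S) (hatt : ∃ p ∈ milneDomain L, m = |u p|) :
    m ≤ 5 * (11 * M + 6) * N := by
  have hN := h.N1
  have hM := h.M0
  have ht : |t| ≤ 4 * (2 * M + 1) * N := by
    rw [abs_le]
    have h1 := h.t_le
    have h2 := h.neg.t_le
    constructor <;> linarith
  obtain ⟨p, hp, hmp⟩ := hatt
  have hm : 0 ≤ m := by rw [hmp]; exact abs_nonneg _
  have hub : m ≤ 3 * M + |t| + 2 * N + 2 * κ * m + 3 / 4 * m := by
    have h1 := h.upper p hp
    have h2 := h.neg.upper p hp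
    rw [abs_neg] at h2
    have : |u p| ≤ 3 * M + |t| + 2 * N + 2 * κ * m + 3 / 4 * m := by
      rw [abs_le]; constructor <;> linarith
    linarith
  have hk : κ * m ≤ 1 / 100 * m := mul_le_mul_of_nonneg_right h.kk hm
  have hMN : M ≤ M * N := le_mul_of_one_le_right hM hN
  nlinarith

lemma domain_uniqueDiff {L : ℝ} (hL : 0 < L) : UniqueDiffOn ℝ (milneDomain L) := by
  have hp := Real.pi_pos
  exact (uniqueDiffOn_Icc hL).prod
    ((uniqueDiffOn_Icc (by linarith)).prod (uniqueDiffOn_Icc (by linarith)))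

lemma domain_closure {L : ℝ} (hL : 0 < L) :
    milneDomain L ⊆ closure (interior (milneDomain L)) := by
  have hp := Real.pi_pos
  have h1 : (-(π / 2)) ≠ π / 2 := by intro h; linarith
  have h2 : (-π) ≠ π := by intro h; linarith
  unfold milneDomain
  rw [interior_prod_eq, interior_prod_eq, interior_Icc, interior_Icc, interior_Icc,
    closure_prod_eq, closure_prod_eq, closure_Ioo hL.ne, closure_Ioo h1, closure_Ioo h2]

/-- The equation extends to the closed domain. -/
lemma eqn_closed {R₁ R₂ ε n : ℝ} {h : ℝ → ℝ → ℝ} {S f : ℝ × ℝ × ℝ → ℝ}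
    (hL : 0 < layerL ε n)
    (hR₁ : ∀ η ∈ Icc 0 (layerL ε n), R₁ - ε * η ≠ 0)
    (hR₂ : ∀ η ∈ Icc 0 (layerL ε n), R₂ - ε * η ≠ 0)
    (hS : ContinuousOn S (milneDomain (layerL ε n)))
    (hf : IsMilneSolution R₁ R₂ ε n h S f) :
    ∀ p ∈ milneDomain (layerL ε n),
      Real.sin p.2.1 * fderivWithin ℝ f (milneDomain (layerL ε n)) p (1, 0, 0)
      + force R₁ R₂ ε p.1 p.2.2 * Real.cos p.2.1
        * fderivWithin ℝ f (milneDomain (layerL ε n)) p (0, 1, 0)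
      + f p - angAvg f p.1 = S p := by
  set L := layerL ε n with hLdef
  have hf' := hf.smooth.continuousOn_fderivWithin (domain_uniqueDiff hL) le_rfl
  have hfc := hf.smooth.continuousOn
  have hF : ContinuousOn (fun p : ℝ × ℝ × ℝ => force R₁ R₂ ε p.1 p.2.2) (milneDomain L) := by
    unfold force
    refine ContinuousOn.mul continuousOn_const (ContinuousOn.add ?_ ?_)
    · exact ContinuousOn.div (by fun_prop) (by fun_prop) (fun p hp => hR₁ p.1 hp.1)
    · exact ContinuousOn.div (by fun_prop) (by fun_prop) (fun p hp => hR₂ p.1 hp.1)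
  have hA : ContinuousOn (fun p : ℝ × ℝ × ℝ => angAvg f p.1) (milneDomain L) := by
    have hv := angAvg_cont (clip_comp_cont hL.le hfc)
    refine ContinuousOn.congr (f := fun p : ℝ × ℝ × ℝ => angAvg (fun p => f (clip L p)) p.1)
      (hv.comp continuous_fst).continuousOn ?_
    intro p hp
    exact angAvg_congr hp.1 (fun p hp => by simp only [clip_eq hp])
  have hd1 := hf'.clm_apply (continuousOn_const (c := ((1, 0, 0) : ℝ × ℝ × ℝ)))
  have hd2 := hf'.clm_apply (continuousOn_const (c := ((0, 1, 0) : ℝ × ℝ × ℝ)))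
  have hsin : ContinuousOn (fun p : ℝ × ℝ × ℝ => Real.sin p.2.1) (milneDomain L) := by fun_prop
  have hcos : ContinuousOn (fun p : ℝ × ℝ × ℝ => Real.cos p.2.1) (milneDomain L) := by fun_prop
  have hlhs := (((hsin.mul hd1).add ((hF.mul hcos).mul hd2)).add hfc).sub hA
  refine Set.EqOn.of_subset_closure (s := interior (milneDomain L)) ?_ hlhs hS interior_subset
    (domain_closure hL)
  intro p hp
  have he := hf.eqn p hp
  have hnhds : milneDomain L ∈ nhds p := mem_interior_iff_mem_nhds.1 hp
  have hdiff : HasFDerivAt f (fderivWithin ℝ f (milneDomain L) p) p :=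
    ((hf.smooth.differentiableOn one_ne_zero p (interior_subset hp)).hasFDerivWithinAt).hasFDerivAt
      hnhds
  have e1 : dEta f p = fderivWithin ℝ f (milneDomain L) p (1, 0, 0) := by
    have hl : HasDerivAt (fun t : ℝ => ((t, p.2.1, p.2.2) : ℝ × ℝ × ℝ)) (1, 0, 0) p.1 :=
      (hasDerivAt_id p.1).prodMk ((hasDerivAt_const _ _).prodMk (hasDerivAt_const _ _))
    exact (hdiff.comp_hasDerivAt p.1 hl).deriv
  have e2 : dPhi f p = fderivWithin ℝ f (milneDomain L) p (0, 1, 0) := by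
    have hl : HasDerivAt (fun t : ℝ => ((p.1, t, p.2.2) : ℝ × ℝ × ℝ)) (0, 1, 0) p.2.1 :=
      (hasDerivAt_const _ _).prodMk ((hasDerivAt_id p.2.1).prodMk (hasDerivAt_const _ _))
    exact (hdiff.comp_hasDerivAt p.2.1 hl).deriv
  rw [e1, e2] at he
  exact he

lemma force_bounds {R₁ R₂ r ε η ψ : ℝ} (hr : 0 < r) (hε : 0 < ε) (h1 : r / 2 ≤ R₁ - ε * η)
    (h2 : r / 2 ≤ R₂ - ε * η) :
    force R₁ R₂ ε η ψ ≤ 0 ∧ -(2 * ε / r) ≤ force R₁ R₂ ε η ψ := by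
  have a1 : Real.sin ψ ^ 2 / (R₁ - ε * η) ≤ Real.sin ψ ^ 2 / (r / 2) :=
    div_le_div_of_nonneg_left (sq_nonneg _) (by positivity) h1
  have a2 : Real.cos ψ ^ 2 / (R₂ - ε * η) ≤ Real.cos ψ ^ 2 / (r / 2) :=
    div_le_div_of_nonneg_left (sq_nonneg _) (by positivity) h2
  have b1 : 0 ≤ Real.sin ψ ^ 2 / (R₁ - ε * η) := div_nonneg (sq_nonneg _) (by linarith)
  have b2 : 0 ≤ Real.cos ψ ^ 2 / (R₂ - ε * η) := div_nonneg (sq_nonneg _) (by linarith)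
  have e : Real.sin ψ ^ 2 / (r / 2) + Real.cos ψ ^ 2 / (r / 2) = 2 / r := by
    rw [← add_div, Real.sin_sq_add_cos_sq]; field_simp
  have e' : 2 * ε / r = ε * (2 / r) := by ring
  unfold force
  rw [e']
  constructor
  · nlinarith [mul_nonneg hε.le (add_nonneg b1 b2)]
  · have : ε * (Real.sin ψ ^ 2 / (R₁ - ε * η) + Real.cos ψ ^ 2 / (R₂ - ε * η)) ≤ ε * (2 / r) :=
      mul_le_mul_of_nonneg_left (by linarith) hε.le
    linarith

/-- Theorem "Milne LI Theorem": `L^∞` bound via the `L²` bound. -/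
theorem milne_Linf_estimate (R₁ R₂ n K M : ℝ) (hR₁ : 0 < R₁) (hR₂ : 0 < R₂)
    (hn : n ∈ Ioo (0 : ℝ) (1 / 2)) (hK : 0 < K) (hM : 0 < M) :
    ∃ ε₀ ∈ Ioo (0 : ℝ) 1, ∃ C > (0 : ℝ),
      ∀ ε ∈ Ioc (0 : ℝ) ε₀, ∀ h : ℝ → ℝ → ℝ, ∀ S f : ℝ × ℝ × ℝ → ℝ,
        DataBounds K M (layerL ε n) h S → IsMilneSolution R₁ R₂ ε n h S f →
        linfNorm (layerL ε n) (fun p => f p - limitValue (layerL ε n) f)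
          ≤ C * (1 + l2Norm (layerL ε n) (fun p => f p - limitValue (layerL ε n) f)) := by
  obtain ⟨r, hr, hr1, hrR₁, hrR₂⟩ : ∃ r : ℝ, 0 < r ∧ r ≤ 1 ∧ r ≤ R₁ ∧ r ≤ R₂ :=
    ⟨min 1 (min R₁ R₂), by positivity, min_le_left _ _,
      (min_le_right _ _).trans (min_le_left _ _), (min_le_right _ _).trans (min_le_right _ _)⟩
  refine ⟨(r / 20) ^ 2, ⟨by positivity, by nlinarith⟩, 5 * (11 * M + 6), by positivity, ?_⟩
  rintro ε ⟨hε, hεr⟩ h S f hdata hsol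
  have hε1 : ε ≤ 1 := by nlinarith
  have hL1 : 1 ≤ layerL ε n :=
    Real.one_le_rpow_of_pos_of_le_one_of_nonpos hε hε1 (by linarith [hn.1])
  have hεL : ε * layerL ε n ≤ r / 2 := by
    have e1 : ε * layerL ε n = ε ^ (1 - n) := by
      unfold layerL
      rw [sub_eq_add_neg, Real.rpow_add hε, Real.rpow_one]
    have e2 : ε ^ (1 - n) ≤ ε ^ (1 / 2 : ℝ) :=
      Real.rpow_le_rpow_of_exponent_ge hε hε1 (by linarith [hn.2])
    rw [← Real.sqrt_eq_rpow] at e2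
    have e3 : Real.sqrt ε ≤ r / 20 := Real.sqrt_le_iff.2 ⟨by positivity, hεr⟩
    linarith
  have heqn := eqn_closed (h := h) (S := S) (f := f) (R₁ := R₁) (R₂ := R₂) (ε := ε) (n := n)
    (by linarith)
    (fun η hη => by
      have : ε * η ≤ ε * layerL ε n := mul_le_mul_of_nonneg_left hη.2 hε.le
      intro h0; linarith)
    (fun η hη => by
      have : ε * η ≤ ε * layerL ε n := mul_le_mul_of_nonneg_left hη.2 hε.le
      intro h0; linarith)
    hdata.sSmooth.continuousOn hsol
  generalize ht : limitValue (layerL ε n) f = t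
  have hsm := hsol.smooth
  have hrefl := hsol.reflect
  have hsB := hdata.sBound
  generalize hLL : layerL ε n = L at *
  have hL0 : 0 ≤ L := by linarith
  have hp := Real.pi_pos
  have hfc := hsm.continuousOn
  have hcont : ContinuousOn (fun p => |f p - t|) (milneDomain L) :=
    (hfc.sub continuousOn_const).abs
  have hcomp : IsCompact (milneDomain L) := isCompact_Icc.prod (isCompact_Icc.prod isCompact_Icc)
  have hmem0 : ((0, 0, 0) : ℝ × ℝ × ℝ) ∈ milneDomain L :=
    ⟨⟨le_rfl, by linarith⟩, ⟨by linarith, by linarith⟩, ⟨by linarith, by linarith⟩⟩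
  obtain ⟨p₀, hp₀, hmax⟩ := hcomp.exists_isMaxOn ⟨_, hmem0⟩ hcont
  have hforce : ∀ p ∈ milneDomain L, force R₁ R₂ ε p.1 p.2.2 ≤ 0 ∧
      -(2 * ε / r) ≤ force R₁ R₂ ε p.1 p.2.2 := by
    intro p hp
    have : ε * p.1 ≤ ε * L := mul_le_mul_of_nonneg_left hp.1.2 hε.le
    exact force_bounds hr hε (by linarith) (by linarith)
  have core : Core L (2 * ε / r) M t (1 + l2Norm L (fun p => f p - t)) |f p₀ - t|
      (force R₁ R₂ ε) (fun p => f p - t) (fderivWithin ℝ f (milneDomain L)) S :=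
    { L1 := hL1
      N1 := by
        have : 0 ≤ l2Norm L (fun p => f p - t) := Real.sqrt_nonneg _
        linarith
      M0 := hM.le
      k0 := by positivity
      kk := by
        rw [div_le_iff₀ hr]
        nlinarith
      der := fun p hp =>
        ((hsm.differentiableOn one_ne_zero p hp).hasFDerivWithinAt).sub_const t
      eqn := by
        intro p hp
        have e := heqn p hp
        have hc := clip_comp_cont hL0 hfc
        have e1 : angAvg (fun p => f p - t) p.1 = angAvg f p.1 - t := by
          rw [angAvg_congr hp.1 (k := fun p => -t + 1 * f (clip L p))
            (fun q hq => by rw [clip_eq hq]; ring), angAvg_affine hc,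
            angAvg_congr hp.1 (g := f) (k := fun p => f (clip L p))
            (fun q hq => by rw [clip_eq hq])]
          ring
        rw [e1]
        linarith
      sB := by
        intro p hp
        have e := hsB p hp
        have h1 : 1 ≤ Real.exp (K * p.1) := Real.one_le_exp (mul_nonneg hK.le hp.1.1)
        have h2 : |S p| ≤ |S p| + |dEta S p| + |dPhi S p| + |dPsi S p| := by
          linarith [abs_nonneg (dEta S p), abs_nonneg (dPhi S p), abs_nonneg (dPsi S p)]
        nlinarith [abs_nonneg (S p)]
      inflow := by
        rintro ⟨x, φ, ψ⟩ hp h0 hs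
        simp only at h0 hs
        subst h0
        have hq : (φ, ψ) ∈ inflowSet := ⟨hs, hp.2.1, hp.2.2⟩
        have e := hsol.inflow _ hq
        have b := hdata.hBound _ hq
        simp only at e b
        rw [sub_add_cancel, e]
        linarith [abs_nonneg (deriv (fun t => h t ψ) φ), abs_nonneg (deriv (fun t => h φ t) ψ)]
      refl := fun φ ψ => by rw [hrefl φ ψ]
      Fn := fun p hp => (hforce p hp).1
      Fk := fun p hp => (hforce p hp).2
      mB := fun p hp => hmax hp
      l2 := by
        have h1 : Real.sqrt (∫ η in (0 : ℝ)..L, ∫ ψ in (-π)..π, ∫ φ in (-(π / 2))..(π / 2),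
            (f (η, φ, ψ) - t) ^ 2 * Real.cos φ) ≤ 1 + l2Norm L (fun p => f p - t) := by
          have : Real.sqrt (∫ η in (0 : ℝ)..L, ∫ ψ in (-π)..π, ∫ φ in (-(π / 2))..(π / 2),
            (f (η, φ, ψ) - t) ^ 2 * Real.cos φ) = l2Norm L (fun p => f p - t) := rfl
          linarith
        exact (Real.sqrt_le_iff.1 h1).2 }
  have hfin := core.final ⟨p₀, hp₀, rfl⟩
  have hfin0 : 0 ≤ 5 * (11 * M + 6) * (1 + l2Norm L (fun p => f p - t)) :=
    (abs_nonneg _).trans hfin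
  unfold linfNorm
  refine Real.iSup_le (fun p => Real.iSup_le (fun hp => ?_) hfin0) hfin0
  exact le_trans (hmax hp) hfin

end MilneStmt
end
end
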